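/- Suppose Algorithm 1 is run on an on-line P_9-free bipartite graph G and the largest color index of a color it uses is k ≥ 2. Then Algorithm 1 uses at most 3k colors on G, the graph G contains X_{⌊√(k/2)⌋} as an induced subgraph, and consequently the on-line chromatic number of G satisfies χ*(G) ≥ ⌊√(k/2)⌋. -/

import Mathlib

/-! ### P_n-free graphs -/

/-- `f` lists the vertices of an induced path on `n` vertices in `G`. -/
def IsInducedPath {V : Type*} (G : SimpleGraph V) (n : ℕ) (f : Fin n → V) : Prop :=
  Function.Injective f ∧
    ∀ a b : Fin n, G.Adj (f a) (f b) ↔ (a.val + 1 = b.val ∨ b.val + 1 = a.val)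

/-- `G` contains no induced path on `n` vertices. -/
def PFree {V : Type*} (G : SimpleGraph V) (n : ℕ) : Prop :=
  ¬ ∃ f : Fin n → V, IsInducedPath G n f

/-! ### The graphs `X_k` -/

/-- Vertex set of the graph `X_k` (with a junk value at `k = 0`). -/
def XV : ℕ → Type
  | 0 => PUnit
  | 1 => PUnit
  | 2 => Bool
  | (n+3) => Option (XV (n+2) ⊕ XV (n+2))

/-- The root of `X_k`. -/
def XRoot : (k : ℕ) → XV k
  | 0 => PUnit.unit
  | 1 => PUnit.unit
  | 2 => true
  | (_+3) => none

/-- The side of a vertex of `X_k`: `true` is the root side, `false` the non-root side. -/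
def XSide : (k : ℕ) → XV k → Bool
  | 0, _ => true
  | 1, _ => true
  | 2, v => v
  | (_+3), none => true
  | (n+3), some (Sum.inl x) => !(XSide (n+2) x)
  | (n+3), some (Sum.inr x) => XSide (n+2) x

/-- Base adjacency relation of `X_k`:  for `k ≥ 3`, `X_k` consists of two disjoint copies of
`X_{k-1}` with no edges in between, together with a root vertex joined to the root side of the
first copy and to the non-root side of the second copy. -/
def XRel : (k : ℕ) → XV k → XV k → Prop
  | 0, _, _ => False
  | 1, _, _ => False
  | 2, u, v => u ≠ v
  | (n+3), none, some (Sum.inl x) => XSide (n+2) x = true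
  | (n+3), none, some (Sum.inr x) => XSide (n+2) x = false
  | (n+3), some (Sum.inl x), none => XSide (n+2) x = true
  | (n+3), some (Sum.inr x), none => XSide (n+2) x = false
  | (n+3), some (Sum.inl x), some (Sum.inl y) => XRel (n+2) x y
  | (n+3), some (Sum.inr x), some (Sum.inr y) => XRel (n+2) x y
  | (_+3), _, _ => False

/-- The graph `X_k`. -/
def XGraph (k : ℕ) : SimpleGraph (XV k) := SimpleGraph.fromRel (XRel k)

/-! ### On-line coloring algorithms and the on-line chromatic number -/

/-- A (deterministic) on-line coloring algorithm: upon presentation of the `(k+1)`-st vertex it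
sees the induced subgraph on the first `k+1` vertices in order of presentation (modelled as a
graph on `Fin (k+1)`, the new vertex being the last one) and it outputs the color of the new
vertex. -/
def OnlineAlg : Type := (k : ℕ) → SimpleGraph (Fin (k + 1)) → ℕ

/-- The color that algorithm `A` assigns to the `i`-th presented vertex of the on-line graph
`G` (vertices presented in the order `0, 1, 2, …` of `Fin n`). -/
def runColor (A : OnlineAlg) {n : ℕ} (G : SimpleGraph (Fin n)) (i : Fin n) : ℕ :=
  A i.val (G.comap (Fin.castLE i.isLt))

/-- An on-line algorithm is required to always produce a proper coloring. -/
def IsProperAlg (A : OnlineAlg) : Prop :=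
  ∀ (n : ℕ) (G : SimpleGraph (Fin n)) (i j : Fin n),
    G.Adj i j → runColor A G i ≠ runColor A G j

/-- The number of colors that `A` uses on the on-line graph `G`. -/
def numColors (A : OnlineAlg) {n : ℕ} (G : SimpleGraph (Fin n)) : ℕ :=
  (Finset.univ.image (runColor A G)).card

/-- The on-line chromatic number of a finite graph `G`:
`χ*(G) = inf_A max_π A(G,π)`, the infimum over all proper on-line algorithms of the maximum
over all enumerations `π` of the vertices of `G` of the number of colors used. -/
noncomputable def onlineChrom (V : Type) [Fintype V] (G : SimpleGraph V) : ℕ :=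
  sInf { m : ℕ | ∃ A : OnlineAlg, IsProperAlg A ∧
          ∀ (n : ℕ) (π : Fin n ≃ V), numColors A (G.comap π) ≤ m }

/-! ### Algorithm 1 -/

/-- The three palettes of colors `a_i`, `b_i`, `c_i` used by Algorithm 1. -/
inductive PalColor : Type
  | a : ℕ → PalColor
  | b : ℕ → PalColor
  | c : ℕ → PalColor
  deriving DecidableEq

/-- The index of a color. -/
def PalColor.index : PalColor → ℕ
  | a i => i
  | b i => i
  | c i => i

/-- A vertex `u` has color index `j` when its color is `a_j` or `b_j`. -/
def hasColorIndex (col : ℕ → PalColor) (u j : ℕ) : Prop :=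
  col u = PalColor.a j ∨ col u = PalColor.b j

/-- Vertex set of `G_i[u]` at time `t` (vertices are presented in the order `0, 1, 2, …`):
the vertices presented before time `t` whose color has index between `1` and `i`,
together with `u`. -/
def domSet (col : ℕ → PalColor) (t i u : ℕ) : Set ℕ :=
  {w | (w < t ∧ 1 ≤ (col w).index ∧ (col w).index ≤ i) ∨ w = u}

/-- `x` and `y` are connected within the subgraph of `G` induced on `S`. -/
def ReachIn (G : SimpleGraph ℕ) (S : Set ℕ) (x y : ℕ) : Prop :=
  ∃ (hx : x ∈ S) (hy : y ∈ S), (G.induce S).Reachable ⟨x, hx⟩ ⟨y, hy⟩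

/-- `x` and `y` are joined by a walk of even length within the subgraph of `G` induced on `S`;
in a bipartite graph this says exactly that `x` and `y` are on the same side of their
(common) connected component. -/
def EvenReachIn (G : SimpleGraph ℕ) (S : Set ℕ) (x y : ℕ) : Prop :=
  ∃ (hx : x ∈ S) (hy : y ∈ S) (p : (G.induce S).Walk ⟨x, hx⟩ ⟨y, hy⟩), Even p.length

/-- `C_i[u]` at time `t`: the connected component of `u` in the subgraph induced on
`domSet col t i u`. -/
def comp (G : SimpleGraph ℕ) (col : ℕ → PalColor) (t i u : ℕ) : Set ℕ :=
  {w | ReachIn G (domSet col t i u) u w}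

/-- `C_i^y(u)` at time `t`: the connected component of `y` in `C_i(u) = C_i[u] \ {u}`. -/
def compMinus (G : SimpleGraph ℕ) (col : ℕ → PalColor) (t i u y : ℕ) : Set ℕ :=
  {w | ReachIn G (domSet col t i u \ {u}) y w}

/-- Color `a_i` is mixed in `C_i[t]` at time `t`: vertices on both sides of `C_i[t]`
have color `a_i`. -/
def MixedA (G : SimpleGraph ℕ) (col : ℕ → PalColor) (t i : ℕ) : Prop :=
  ∃ x ∈ comp G col t i t, ∃ y ∈ comp G col t i t,
    col x = PalColor.a i ∧ col y = PalColor.a i ∧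
    ¬ EvenReachIn G (domSet col t i t) x y

/-- `m = max {i ≥ 1 | a_i is mixed in C_i[t]} + 1` (with `max ∅ = 0`). -/
noncomputable def mIdx (G : SimpleGraph ℕ) (col : ℕ → PalColor) (t : ℕ) : ℕ :=
  sSup {i | 1 ≤ i ∧ MixedA G col t i} + 1

/-- `u'` is universal to `C_{j-1}[u]` (at time `t`): `u'` is adjacent to all vertices in one of
the two sides of `C_{j-1}[u]`. -/
def UnivTo (G : SimpleGraph ℕ) (col : ℕ → PalColor) (t j u u' : ℕ) : Prop :=
  (∀ x ∈ comp G col t (j-1) u, EvenReachIn G (domSet col t (j-1) u) u x → G.Adj u' x) ∨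
  (∀ x ∈ comp G col t (j-1) u, ¬ EvenReachIn G (domSet col t (j-1) u) u x → G.Adj u' x)

open Classical in
/-- One step of Algorithm 1: the color given to the vertex presented at time `t`, assuming that
`col` records the colors of the previously presented vertices `0, …, t-1`. -/
noncomputable def step (G : SimpleGraph ℕ) (col : ℕ → PalColor) (t : ℕ) : PalColor :=
  let m := mIdx G col t
  let S := domSet col t m t
  let C := comp G col t m t
  let I1 : Set ℕ := {x ∈ C | EvenReachIn G S t x}
  let I2 : Set ℕ := {x ∈ C | ¬ EvenReachIn G S t x}
  if ∃ u ∈ I2, col u = PalColor.a m then PalColor.b m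
  else if ∃ u ∈ I2, col u = PalColor.c m then PalColor.a m
  else if ∃ u ∈ I1 ∪ I2, ∃ u' ∈ I2, ∃ j : ℕ, hasColorIndex col u j ∧
      ((m : ℝ) - Real.sqrt (2 * m) + 2 ≤ (j : ℝ)) ∧ UnivTo G col t j u u'
    then PalColor.c m
  else PalColor.a m

/-- The colors of the first `k` presented vertices under Algorithm 1 (junk elsewhere). -/
noncomputable def algoColAux (G : SimpleGraph ℕ) : ℕ → ℕ → PalColor
  | 0 => fun _ => PalColor.a 0
  | (k+1) => fun w => if w = k then step G (algoColAux G k) k else algoColAux G k w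

/-- `algoCol G v` is the color that Algorithm 1 assigns to vertex `v` when the on-line graph `G`
is presented in the vertex order `0, 1, 2, …`. -/
noncomputable def algoCol (G : SimpleGraph ℕ) (v : ℕ) : PalColor :=
  algoColAux G (v + 1) v

/-- The on-line graph on `ℕ` obtained by presenting the vertices of `G` in the order given by
the enumeration `π` (vertices `≥ n` are isolated). -/
def toNatGraph {V : Type*} (G : SimpleGraph V) {n : ℕ} (π : Fin n ≃ V) : SimpleGraph ℕ :=
  SimpleGraph.fromRel (fun i j => ∃ (hi : i < n) (hj : j < n), G.Adj (π ⟨i, hi⟩) (π ⟨j, hj⟩))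


/-! ### Reachability -/

section Reach
variable {G : SimpleGraph ℕ}

theorem ReachIn.rfl' {S : Set ℕ} {x : ℕ} (h : x ∈ S) : ReachIn G S x x :=
  ⟨h, h, SimpleGraph.Reachable.refl _⟩

theorem ReachIn.symm' {S : Set ℕ} {x y : ℕ} (h : ReachIn G S x y) : ReachIn G S y x := by
  obtain ⟨hx, hy, h⟩ := h
  exact ⟨hy, hx, h.symm⟩

theorem ReachIn.trans' {S : Set ℕ} {x y z : ℕ} (h : ReachIn G S x y) (h2 : ReachIn G S y z) :
    ReachIn G S x z := by
  obtain ⟨hx, hy, h⟩ := h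
  obtain ⟨_, hz, h2⟩ := h2
  exact ⟨hx, hz, h.trans h2⟩

theorem ReachIn.left {S : Set ℕ} {x y : ℕ} (h : ReachIn G S x y) : x ∈ S := h.1

theorem ReachIn.right {S : Set ℕ} {x y : ℕ} (h : ReachIn G S x y) : y ∈ S := h.2.1

theorem ReachIn.of_adj {S : Set ℕ} {x y : ℕ} (hx : x ∈ S) (hy : y ∈ S) (h : G.Adj x y) :
    ReachIn G S x y := by
  refine ⟨hx, hy, SimpleGraph.Adj.reachable ?_⟩
  exact h

theorem ReachIn.ind {S : Set ℕ} {x y : ℕ} (h : ReachIn G S x y) (P : ℕ → Prop) (h0 : P x)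
    (hs : ∀ b c, ReachIn G S x b → c ∈ S → P b → G.Adj b c → P c) : P y := by
  obtain ⟨hx, hy, ⟨w⟩⟩ := h
  have key : ∀ (a b : S) (w : (G.induce S).Walk a b), ReachIn G S x a → P a → P b := by
    intro a b w
    induction w with
    | nil => intro _ h; exact h
    | cons hadj w ih =>
      intro hr hp
      rename_i u v w'
      have hadj' : G.Adj u v := hadj
      exact ih (hr.trans' (ReachIn.of_adj u.2 v.2 hadj')) (hs _ _ hr v.2 hp hadj')
  exact key _ _ w (ReachIn.rfl' hx) h0

theorem ReachIn.mono {S T : Set ℕ} (hST : S ⊆ T) {x y : ℕ} (h : ReachIn G S x y) :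
    ReachIn G T x y := by
  refine h.ind (fun b => ReachIn G T x b) (ReachIn.rfl' (hST h.left)) ?_
  intro b c hb hc hP hadj
  exact hP.trans' (ReachIn.of_adj (hST hb.right) (hST hc) hadj)

/-- going through the extra vertex -/
theorem ReachIn.insert_cases {S : Set ℕ} {t x y : ℕ} (hx : x ∈ S)
    (h : ReachIn G (S ∪ {t}) x y) :
    ReachIn G S x y ∨ ∃ g, G.Adj t g ∧ ReachIn G S x g := by
  refine h.ind (fun b => ReachIn G S x b ∨ ∃ g, G.Adj t g ∧ ReachIn G S x g)
    (Or.inl (ReachIn.rfl' hx)) ?_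
  intro b c hb hc hP hadj
  rcases hP with hP | hP
  · rcases hc with hc | hc
    · exact Or.inl (hP.trans' (ReachIn.of_adj hP.right hc hadj))
    · have : c = t := hc
      subst this
      exact Or.inr ⟨b, hadj.symm, hP⟩
  · exact Or.inr hP

theorem even_iff_side {side : ℕ → Bool} (hb : ∀ x y, G.Adj x y → side x ≠ side y)
    {S : Set ℕ} {x y : ℕ} (h : ReachIn G S x y) :
    EvenReachIn G S x y ↔ side x = side y := by
  have key : ∀ (a b : S) (w : (G.induce S).Walk a b), Even w.length ↔ side a = side b := by
    intro a b w
    induction w with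
    | nil => simp
    | cons hadj w ih =>
      rename_i u v w'
      have hadj' : G.Adj u v := hadj
      have := hb _ _ hadj'
      rw [SimpleGraph.Walk.length_cons, Nat.even_add_one, ih]
      revert this
      cases side u <;> cases side v <;> cases side w' <;> simp
  obtain ⟨hx, hy, ⟨w⟩⟩ := h
  constructor
  · rintro ⟨_, _, p, hp⟩
    exact (key _ _ p).1 hp
  · intro hs
    exact ⟨hx, hy, w, (key _ _ w).2 hs⟩

end Reach

/-! ### The algorithm -/

section Algo
variable (G : SimpleGraph ℕ)

theorem aux_lt {t w : ℕ} (h : w < t) : algoColAux G t w = algoCol G w := by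
  induction t with
  | zero => omega
  | succ t ih =>
    rcases Nat.lt_succ_iff_lt_or_eq.1 h with h | h
    · have : w ≠ t := by omega
      rw [← ih h]
      simp [algoColAux, this]
    · subst h; rfl

theorem aux_ge {t w : ℕ} (h : t ≤ w) : algoColAux G t w = PalColor.a 0 := by
  induction t with
  | zero => rfl
  | succ t ih =>
    have : w ≠ t := by omega
    rw [← ih (by omega)]
    simp [algoColAux, this]

theorem algo_step (t : ℕ) : algoCol G t = step G (algoColAux G t) t := by
  simp [algoCol, algoColAux]

/-- presented vertices of index at most `i` -/
def DD (t i : ℕ) : Set ℕ := {w | w < t ∧ 1 ≤ (algoCol G w).index ∧ (algoCol G w).index ≤ i}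

theorem dom_eq (t i u : ℕ) : domSet (algoColAux G t) t i u = DD G t i ∪ {u} := by
  ext w
  simp only [domSet, DD, Set.mem_ofPred_eq, Set.mem_union, Set.mem_singleton_iff]
  constructor
  · rintro (⟨h, h2⟩ | h)
    · rw [aux_lt G h] at h2; exact Or.inl ⟨h, h2⟩
    · exact Or.inr h
  · rintro (⟨h, h2⟩ | h)
    · left; rw [aux_lt G h]; exact ⟨h, h2⟩
    · exact Or.inr h

theorem DD_mono {t t' i i' : ℕ} (ht : t ≤ t') (hi : i ≤ i') : DD G t i ⊆ DD G t' i' := by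
  rintro w ⟨h1, h2, h3⟩
  exact ⟨by omega, h2, by omega⟩

theorem step_index (col : ℕ → PalColor) (t : ℕ) : (step G col t).index = mIdx G col t := by
  unfold step
  simp only
  split_ifs <;> rfl

theorem algo_index (t : ℕ) : (algoCol G t).index = mIdx G (algoColAux G t) t := by
  rw [algo_step, step_index]

theorem one_le_index (t : ℕ) : 1 ≤ (algoCol G t).index := by
  rw [algo_index]; unfold mIdx; omega

theorem aux_eq_a {t x i : ℕ} (hi : 1 ≤ i) (h : algoColAux G t x = PalColor.a i) :
    x < t ∧ algoCol G x = PalColor.a i := by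
  have hx : x < t := by
    by_contra hc
    rw [aux_ge G (by omega)] at h
    injection h; omega
  rw [aux_lt G hx] at h
  exact ⟨hx, h⟩

theorem mixed_bdd (t : ℕ) : BddAbove {i | 1 ≤ i ∧ MixedA G (algoColAux G t) t i} := by
  refine ⟨(Finset.range t).sup (fun w => (algoCol G w).index), ?_⟩
  rintro i ⟨hi, x, _, y, _, hx, _⟩
  obtain ⟨h1, h2⟩ := aux_eq_a G hi hx
  have := Finset.le_sup (f := fun w => (algoCol G w).index) (Finset.mem_range.2 h1)
  simpa [h2, PalColor.index] using this

theorem not_mixed_of_ge {t m : ℕ} (hm : (algoCol G t).index ≤ m) (h1 : 1 ≤ m) :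
    ¬ MixedA G (algoColAux G t) t m := by
  intro h
  rw [algo_index] at hm
  have := le_csSup (mixed_bdd G t) (show m ∈ {i | 1 ≤ i ∧ MixedA G (algoColAux G t) t i} from ⟨h1, h⟩)
  unfold mIdx at hm
  omega

theorem mixed_pred {t j : ℕ} (hj : (algoCol G t).index = j + 1) (h1 : 1 ≤ j) :
    MixedA G (algoColAux G t) t j := by
  rw [algo_index] at hj
  unfold mIdx at hj
  have hs : sSup {i | 1 ≤ i ∧ MixedA G (algoColAux G t) t i} = j := by omega
  have hne : {i | 1 ≤ i ∧ MixedA G (algoColAux G t) t i}.Nonempty := by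
    by_contra hc
    rw [Set.not_nonempty_iff_eq_empty] at hc
    rw [hc] at hs
    simp at hs
    omega
  have := Nat.sSup_mem hne (mixed_bdd G t)
  rw [hs] at this
  exact this.2

end Algo

section Inv
variable (G : SimpleGraph ℕ) (side : ℕ → Bool)

/-- adjacency to the whole side of a component -/
def UnivS (t j u u' : ℕ) : Prop :=
  ∀ x, ReachIn G (DD G t (j-1) ∪ {u}) u x → side x ≠ side u' → G.Adj u' x

/-- threshold -/
noncomputable def win (m : ℕ) : ℝ := (m : ℝ) - Real.sqrt (2 * m) + 2

theorem win_gt (m : ℕ) : 1 < win m := by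
  unfold win
  have h0 : (0:ℝ) ≤ m := Nat.cast_nonneg m
  have h1 := Real.sqrt_nonneg (2 * (m:ℝ))
  have h2 := Real.sq_sqrt (show (0:ℝ) ≤ 2 * m by positivity)
  nlinarith [sq_nonneg (Real.sqrt (2 * (m:ℝ)) - 1)]

theorem two_le_of_win {m j : ℕ} (h : win m ≤ j) : 2 ≤ j := by
  have h1 := win_gt m
  have : (1:ℝ) < j := by linarith
  have : 1 < j := by exact_mod_cast this
  omega

/-- third rule -/
def Third (t m : ℕ) : Prop :=
  ∃ u u' j, ReachIn G (DD G t m ∪ {t}) t u ∧ ReachIn G (DD G t m ∪ {t}) t u' ∧ side t ≠ side u' ∧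
    u < t ∧ (algoCol G u = PalColor.a j ∨ algoCol G u = PalColor.b j) ∧ win m ≤ j ∧
    UnivTo G (algoColAux G t) t j u u'

variable {side} (hb : ∀ x y, G.Adj x y → side x ≠ side y)
include hb

theorem NM : ∀ τ m, 1 ≤ m → ∀ x y, algoCol G x = PalColor.a m → algoCol G y = PalColor.a m →
    ReachIn G (DD G τ m) x y → side x = side y := by
  intro τ
  induction τ with
  | zero =>
    intro m _ x y _ _ h
    exact absurd h.left.1 (by omega)
  | succ τ ih =>
    intro m hm x y hx hy h
    by_cases hi : (algoCol G τ).index ≤ m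
    · have hD : DD G (τ+1) m = DD G τ m ∪ {τ} := by
        ext w
        simp only [DD, Set.mem_ofPred_eq, Set.mem_union, Set.mem_singleton_iff]
        constructor
        · rintro ⟨h1, h2⟩
          rcases Nat.lt_succ_iff_lt_or_eq.1 h1 with h | h
          · exact Or.inl ⟨h, h2⟩
          · exact Or.inr h
        · rintro (⟨h1, h2⟩ | h)
          · exact ⟨by omega, h2⟩
          · subst h; exact ⟨by omega, one_le_index G w, hi⟩
      rw [hD] at h
      have hnm := not_mixed_of_ge G hi hm
      have hst := algo_step G τ
      -- one endpoint is the new vertex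
      have hτ : algoCol G τ = PalColor.a m → ∀ z, algoCol G z = PalColor.a m →
          ReachIn G (DD G τ m ∪ {τ}) τ z → side τ = side z := by
        intro hτ z hz hr
        rcases hr.right with hz' | hz'
        swap
        · have : z = τ := hz'
          rw [this]
        by_contra hne
        have hmi : mIdx G (algoColAux G τ) τ = m := by
          rw [← algo_index, hτ]; rfl
        rw [hτ] at hst
        unfold step at hst
        subst hmi
        simp only at hst
        rw [if_pos] at hst
        · cases hst
        · refine ⟨z, ⟨?_, ?_⟩, ?_⟩
          · show ReachIn G _ _ _
            rw [dom_eq]; exact hr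
          · rw [dom_eq, even_iff_side hb hr]; exact hne
          · rw [aux_lt G hz'.1]; exact hz
      by_cases hx' : x = τ
      · subst hx'; exact hτ hx y hy h
      by_cases hy' : y = τ
      · subst hy'; exact (hτ hy x hx h.symm').symm
      have hxD : x ∈ DD G τ m := h.left.resolve_right hx'
      have hyD : y ∈ DD G τ m := h.right.resolve_right hy'
      by_cases hr : ReachIn G (DD G τ m) x y
      · exact ih m hm x y hx hy hr
      rcases h.insert_cases hxD with h1 | ⟨g, hg, hxg⟩
      · exact absurd h1 hr
      by_contra hne
      apply hnm
      have hx2 : ReachIn G (DD G τ m ∪ {τ}) τ x := by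
        refine (ReachIn.of_adj (Or.inr rfl) (Or.inl hxg.right) hg).trans' ?_
        exact (hxg.mono Set.subset_union_left).symm'
      refine ⟨x, ?_, y, ?_, ?_, ?_, ?_⟩
      · show ReachIn G _ _ _
        rw [dom_eq]; exact hx2
      · show ReachIn G _ _ _
        rw [dom_eq]; exact hx2.trans' h
      · rw [aux_lt G hxD.1]; exact hx
      · rw [aux_lt G hyD.1]; exact hy
      · rw [dom_eq, even_iff_side hb h]; exact hne
    · have hD : DD G (τ+1) m = DD G τ m := by
        ext w
        simp only [DD, Set.mem_ofPred_eq]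
        constructor
        · rintro ⟨h1, h2⟩
          rcases Nat.lt_succ_iff_lt_or_eq.1 h1 with h | h
          · exact ⟨h, h2⟩
          · subst h; omega
        · rintro ⟨h1, h2⟩
          exact ⟨by omega, h2⟩
      rw [hD] at h
      exact ih m hm x y hx hy h

theorem split {v j : ℕ} (hj : (algoCol G v).index = j + 1) (h1 : 1 ≤ j) {τ : ℕ} (hτ : v ≤ τ) :
    ∃ f1 f2 g1 g2, f1 < v ∧ f2 < v ∧ algoCol G f1 = PalColor.a j ∧ algoCol G f2 = PalColor.a j ∧
      side f1 = side v ∧ side f2 ≠ side v ∧ G.Adj v g1 ∧ G.Adj v g2 ∧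
      ReachIn G (DD G τ j) f1 g1 ∧ ReachIn G (DD G τ j) f2 g2 ∧ ¬ ReachIn G (DD G τ j) f1 f2 := by
  obtain ⟨x, hx, y, hy, cx, cy, hne⟩ := mixed_pred G hj h1
  obtain ⟨hxv, cx⟩ := aux_eq_a G h1 cx
  obtain ⟨hyv, cy⟩ := aux_eq_a G h1 cy
  have hx : ReachIn G (DD G v j ∪ {v}) v x := by rw [← dom_eq]; exact hx
  have hy : ReachIn G (DD G v j ∪ {v}) v y := by rw [← dom_eq]; exact hy
  have hxy := hx.symm'.trans' hy
  rw [dom_eq, even_iff_side hb hxy] at hne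
  have hD : DD G v j ⊆ DD G τ j := DD_mono G hτ le_rfl
  have mk : ∀ z, z < v → algoCol G z = PalColor.a j → z ∈ DD G v j := by
    intro z hz hc
    refine ⟨hz, one_le_index G z, ?_⟩
    rw [hc]; exact le_rfl
  have hxD := mk x hxv cx
  have hyD := mk y hyv cy
  have hn : ∀ τ, ¬ ReachIn G (DD G τ j) x y := fun τ h => hne (NM G hb τ j h1 x y cx cy h)
  have key : ∀ x y, x ∈ DD G v j → ReachIn G (DD G v j ∪ {v}) x y → ¬ ReachIn G (DD G v j) x y →
      ∃ g, G.Adj v g ∧ ReachIn G (DD G τ j) x g := by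
    intro x y hx h hn
    rcases h.insert_cases hx with h | ⟨g, hg, hr⟩
    · exact absurd h hn
    · exact ⟨g, hg, hr.mono hD⟩
  obtain ⟨g1, hg1, hr1⟩ := key x y hxD hxy (hn v)
  obtain ⟨g2, hg2, hr2⟩ := key y x hyD hxy.symm' (fun h => hn v h.symm')
  by_cases hs : side x = side v
  · exact ⟨x, y, g1, g2, hxv, hyv, cx, cy, hs, fun h => hne (hs.trans h.symm), hg1, hg2, hr1, hr2, hn τ⟩
  · refine ⟨y, x, g2, g1, hyv, hxv, cy, cx, ?_, hs, hg2, hg1, hr2, hr1, fun h => hn τ h.symm'⟩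
    revert hs hne
    cases side x <;> cases side v <;> cases side y <;> simp

theorem univ_iff {t u j : ℕ} (hu : u < t) (hc : algoCol G u = PalColor.a j ∨ algoCol G u = PalColor.b j)
    (hj : 2 ≤ j) (u' : ℕ) : UnivTo G (algoColAux G t) t j u u' ↔ UnivS G side t j u u' := by
  have hi : (algoCol G u).index = (j - 1) + 1 := by
    rcases hc with h | h <;> rw [h] <;> show j = _ <;> omega
  obtain ⟨f1, f2, g1, g2, h1, h2, c1, c2, s1, s2, a1, a2, r1, r2, nr⟩ :=
    split G hb hi (by omega) hu.le
  have hf2 : ReachIn G (DD G t (j-1) ∪ {u}) u f2 :=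
    (ReachIn.of_adj (Or.inr rfl) (Or.inl r2.right) a2).trans' (r2.mono Set.subset_union_left).symm'
  have huu : ReachIn G (DD G t (j-1) ∪ {u}) u u := ReachIn.rfl' (Or.inr rfl)
  have e1 : ∀ x, x ∈ comp G (algoColAux G t) t (j-1) u ↔ ReachIn G (DD G t (j-1) ∪ {u}) u x := by
    intro x
    show ReachIn G _ _ _ ↔ _
    rw [dom_eq]
  unfold UnivTo
  simp only [e1, dom_eq]
  constructor
  · rintro (h | h)
    · have := hb _ _ (h u huu ((even_iff_side hb huu).2 rfl))
      intro x hx hs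
      refine h x hx ((even_iff_side hb hx).2 ?_)
      revert this hs; cases side u <;> cases side u' <;> cases side x <;> simp
    · have := hb _ _ (h f2 hf2 (fun hh => s2 ((even_iff_side hb hf2).1 hh).symm))
      intro x hx hs
      refine h x hx (fun hh => ?_)
      rw [even_iff_side hb hx] at hh
      revert this hs hh s2; cases side u <;> cases side u' <;> cases side x <;> cases side f2 <;> simp
  · intro h
    by_cases hs : side u = side u'
    · right
      intro x hx hh
      rw [even_iff_side hb hx] at hh
      exact h x hx (fun e => hh (hs.trans e.symm))
    · left
      intro x hx hh
      rw [even_iff_side hb hx] at hh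
      exact h x hx (fun e => hs (hh.trans e))

theorem third_iff (t m : ℕ) : (∃ u ∈ {x ∈ comp G (algoColAux G t) t m t | EvenReachIn G (domSet (algoColAux G t) t m t) t x} ∪
      {x ∈ comp G (algoColAux G t) t m t | ¬ EvenReachIn G (domSet (algoColAux G t) t m t) t x},
      ∃ u' ∈ {x ∈ comp G (algoColAux G t) t m t | ¬ EvenReachIn G (domSet (algoColAux G t) t m t) t x},
      ∃ j : ℕ, hasColorIndex (algoColAux G t) u j ∧
      ((m : ℝ) - Real.sqrt (2 * m) + 2 ≤ (j : ℝ)) ∧ UnivTo G (algoColAux G t) t j u u') ↔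
      Third G side t m := by
  have e1 : ∀ x, x ∈ comp G (algoColAux G t) t m t ↔ ReachIn G (DD G t m ∪ {t}) t x := by
    intro x
    show ReachIn G _ _ _ ↔ _
    rw [dom_eq]
  have hsep : {x ∈ comp G (algoColAux G t) t m t | EvenReachIn G (domSet (algoColAux G t) t m t) t x} ∪
      {x ∈ comp G (algoColAux G t) t m t | ¬ EvenReachIn G (domSet (algoColAux G t) t m t) t x} =
      comp G (algoColAux G t) t m t := by
    ext x
    simp only [Set.mem_union, Set.mem_ofPred_eq]
    tauto
  rw [hsep]
  constructor
  · rintro ⟨u, hu, u', ⟨hu', he⟩, j, hc, hw, hU⟩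
    rw [e1] at hu hu'
    rw [dom_eq, even_iff_side hb hu'] at he
    have hj := two_le_of_win (m := m) (j := j) hw
    have hut : u < t := by
      by_contra hcon
      unfold hasColorIndex at hc
      rw [aux_ge G (by omega)] at hc
      rcases hc with hc | hc
      · injection hc; omega
      · cases hc
    unfold hasColorIndex at hc
    rw [aux_lt G hut] at hc
    exact ⟨u, u', j, hu, hu', he, hut, hc, hw, hU⟩
  · rintro ⟨u, u', j, hu, hu', he, hut, hc, hw, hU⟩
    refine ⟨u, (e1 u).2 hu, u', ⟨(e1 u').2 hu', ?_⟩, j, ?_, hw, hU⟩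
    · rw [dom_eq, even_iff_side hb hu']; exact he
    · unfold hasColorIndex
      rw [aux_lt G hut]; exact hc

theorem I2_iff (t m : ℕ) (x : ℕ) : x ∈ {x ∈ comp G (algoColAux G t) t m t | ¬ EvenReachIn G (domSet (algoColAux G t) t m t) t x}
    ↔ ReachIn G (DD G t m ∪ {t}) t x ∧ side t ≠ side x := by
  have e1 : x ∈ comp G (algoColAux G t) t m t ↔ ReachIn G (DD G t m ∪ {t}) t x := by
    show ReachIn G _ _ _ ↔ _
    rw [dom_eq]
  show x ∈ comp G (algoColAux G t) t m t ∧ _ ↔ _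
  rw [e1]
  constructor
  · rintro ⟨h1, h2⟩
    rw [dom_eq, even_iff_side hb h1] at h2
    exact ⟨h1, h2⟩
  · rintro ⟨h1, h2⟩
    rw [dom_eq, even_iff_side hb h1]
    exact ⟨h1, h2⟩

theorem col_a {t m : ℕ} (h : algoCol G t = PalColor.a m) :
    (∃ z, z < t ∧ ReachIn G (DD G t m ∪ {t}) t z ∧ side t ≠ side z ∧ algoCol G z = PalColor.c m) ∨
      ¬ Third G side t m := by
  have hm : mIdx G (algoColAux G t) t = m := by rw [← algo_index, h]; rfl
  have hst := algo_step G t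
  rw [h] at hst
  unfold step at hst
  subst hm
  simp only at hst
  rw [third_iff G hb] at hst
  split_ifs at hst with h1 h2 h3
  · left
    obtain ⟨u, hu, hc⟩ := h2
    rw [I2_iff G hb] at hu
    have hut : u < t := by
      by_contra hcon
      rw [aux_ge G (by omega)] at hc
      cases hc
    rw [aux_lt G hut] at hc
    exact ⟨u, hut, hu.1, hu.2, hc⟩
  · right; exact h3

omit hb in
theorem col_b {t m : ℕ} (h : algoCol G t = PalColor.b m) :
    ∃ z, algoCol G z = PalColor.a m := by
  have hm : mIdx G (algoColAux G t) t = m := by rw [← algo_index, h]; rfl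
  have h1 : 1 ≤ m := by have := one_le_index G t; rw [h] at this; exact this
  have hst := algo_step G t
  rw [h] at hst
  unfold step at hst
  subst hm
  simp only at hst
  split_ifs at hst with h1
  obtain ⟨u, hu, hc⟩ := h1
  exact ⟨u, (aux_eq_a G (by assumption) hc).2⟩

theorem col_c {t m : ℕ} (h : algoCol G t = PalColor.c m) : Third G side t m := by
  have hm : mIdx G (algoColAux G t) t = m := by rw [← algo_index, h]; rfl
  have hst := algo_step G t
  rw [h] at hst
  unfold step at hst
  subst hm
  simp only at hst
  rw [third_iff G hb] at hst
  split_ifs at hst with h1 h2 h3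
  exact h3

end Inv

section XAdj

/-- root of `X_{n+3}` -/
def xn (n : ℕ) : XV (n+3) := (none : Option (XV (n+2) ⊕ XV (n+2)))
/-- first copy -/
def xl {n : ℕ} (x : XV (n+2)) : XV (n+3) := (some (Sum.inl x) : Option (XV (n+2) ⊕ XV (n+2)))
/-- second copy -/
def xr {n : ℕ} (x : XV (n+2)) : XV (n+3) := (some (Sum.inr x) : Option (XV (n+2) ⊕ XV (n+2)))

theorem xcases {n : ℕ} (P : XV (n+3) → Prop) (h1 : P (xn n)) (h2 : ∀ x, P (xl x))
    (h3 : ∀ x, P (xr x)) : ∀ a, P a := by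
  intro (a : Option (XV (n+2) ⊕ XV (n+2)))
  rcases a with _ | a | a
  · exact h1
  · exact h2 a
  · exact h3 a

/-- build a map out of `X_{n+3}` -/
def xrec {n : ℕ} {β : Type} (r : β) (f2 f1 : XV (n+2) → β) : XV (n+3) → β :=
  fun (a : Option (XV (n+2) ⊕ XV (n+2))) =>
    match a with
    | none => r
    | some (Sum.inl x) => f2 x
    | some (Sum.inr x) => f1 x

theorem xadj_def {k : ℕ} (a b : XV k) :
    (XGraph k).Adj a b ↔ a ≠ b ∧ (XRel k a b ∨ XRel k b a) := Iff.rfl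

theorem xadj_nl {n : ℕ} (x : XV (n+2)) :
    (XGraph (n+3)).Adj (xn n) (xl x) ↔ XSide (n+2) x = true := by
  rw [xadj_def]
  constructor
  · rintro ⟨_, h | h⟩ <;> exact h
  · intro h
    refine ⟨fun h => ?_, Or.inl h⟩
    cases h

theorem xadj_nr {n : ℕ} (x : XV (n+2)) :
    (XGraph (n+3)).Adj (xn n) (xr x) ↔ XSide (n+2) x = false := by
  rw [xadj_def]
  constructor
  · rintro ⟨_, h | h⟩ <;> exact h
  · intro h
    refine ⟨fun h => ?_, Or.inl h⟩
    cases h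

theorem xadj_ll {n : ℕ} (x y : XV (n+2)) :
    (XGraph (n+3)).Adj (xl x) (xl y) ↔ (XGraph (n+2)).Adj x y := by
  rw [xadj_def, xadj_def]
  refine and_congr ⟨fun h h' => h (by rw [h']), fun h h' => h (Sum.inl.inj (Option.some.inj h'))⟩ Iff.rfl

theorem xadj_rr {n : ℕ} (x y : XV (n+2)) :
    (XGraph (n+3)).Adj (xr x) (xr y) ↔ (XGraph (n+2)).Adj x y := by
  rw [xadj_def, xadj_def]
  refine and_congr ⟨fun h h' => h (by rw [h']), fun h h' => h (Sum.inr.inj (Option.some.inj h'))⟩ Iff.rfl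

theorem xadj_lr {n : ℕ} (x y : XV (n+2)) : ¬ (XGraph (n+3)).Adj (xl x) (xr y) := by
  rw [xadj_def]
  rintro ⟨_, h | h⟩ <;> exact h

theorem xadj_two (a b : Bool) : (XGraph 2).Adj (a : XV 2) (b : XV 2) ↔ a ≠ b := by
  refine (xadj_def (k := 2) a b).trans ?_
  constructor
  · rintro ⟨h, _⟩; exact h
  · intro h; exact ⟨h, Or.inl h⟩

/-- a map out of `X_{n+3}` is injective -/
theorem xrec_inj {n : ℕ} {β : Type} {r : β} {f2 f1 : XV (n+2) → β} (i2 : Function.Injective f2)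
    (i1 : Function.Injective f1) (h1 : ∀ x, r ≠ f1 x) (h2 : ∀ x, r ≠ f2 x)
    (hd : ∀ x y, f1 x ≠ f2 y) : Function.Injective (xrec r f2 f1) := by
  refine xcases _ ?_ (fun x => ?_) (fun x => ?_) <;> refine xcases _ ?_ (fun y => ?_) (fun y => ?_)
  all_goals intro h
  · rfl
  · exact absurd h (h2 y)
  · exact absurd h (h1 y)
  · exact absurd h.symm (h2 x)
  · rw [i2 h]
  · exact absurd h.symm (hd y x)
  · exact absurd h.symm (h1 x)
  · exact absurd h (hd x y)
  · rw [i1 h]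

theorem xrec_adj {n : ℕ} {β : Type} {H : SimpleGraph β} {r : β} {f2 f1 : XV (n+2) → β}
    (e2 : ∀ a b, H.Adj (f2 a) (f2 b) ↔ (XGraph (n+2)).Adj a b)
    (e1 : ∀ a b, H.Adj (f1 a) (f1 b) ↔ (XGraph (n+2)).Adj a b)
    (hda : ∀ x y, ¬ H.Adj (f1 x) (f2 y))
    (hA1 : ∀ x, H.Adj r (f1 x) ↔ XSide (n+2) x = false)
    (hA2 : ∀ x, H.Adj r (f2 x) ↔ XSide (n+2) x = true) :
    ∀ a b, H.Adj (xrec r f2 f1 a) (xrec r f2 f1 b) ↔ (XGraph (n+3)).Adj a b := by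
  refine xcases _ ?_ (fun x => ?_) (fun x => ?_) <;> refine xcases _ ?_ (fun y => ?_) (fun y => ?_)
  · exact iff_of_false (fun h => h.ne rfl) (fun h => h.ne rfl)
  · exact (hA2 y).trans (xadj_nl y).symm
  · exact (hA1 y).trans (xadj_nr y).symm
  · exact (SimpleGraph.adj_comm _ _ _).trans (((hA2 x).trans (xadj_nl x).symm).trans (SimpleGraph.adj_comm _ _ _))
  · exact (e2 x y).trans (xadj_ll x y).symm
  · exact iff_of_false (fun h => hda _ _ h.symm) (xadj_lr _ _)
  · exact (SimpleGraph.adj_comm _ _ _).trans (((hA1 x).trans (xadj_nr x).symm).trans (SimpleGraph.adj_comm _ _ _))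
  · exact iff_of_false (hda _ _) (fun h => xadj_lr _ _ h.symm)
  · exact (e1 x y).trans (xadj_rr x y).symm

end XAdj

section XInSec
variable (G : SimpleGraph ℕ) (side : ℕ → Bool)

/-- an induced copy of `X_s` inside `S`, whose root side is the side `sd` -/
def XIn (S : Set ℕ) (s : ℕ) (sd : Bool) : Prop :=
  ∃ f : XV s → ℕ, Function.Injective f ∧ (∀ a b, G.Adj (f a) (f b) ↔ (XGraph s).Adj a b) ∧
    ∀ a, f a ∈ S ∧ side (f a) = (XSide s a == sd)

theorem XIn.mono {S T : Set ℕ} (hST : S ⊆ T) {s : ℕ} {sd : Bool} (h : XIn G side S s sd) :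
    XIn G side T s sd := by
  obtain ⟨f, h1, h2, h3⟩ := h
  exact ⟨f, h1, h2, fun a => ⟨hST (h3 a).1, (h3 a).2⟩⟩

theorem XIn.single {S : Set ℕ} {s r : ℕ} (hs : s ≤ 1) (hr : r ∈ S) : XIn G side S s (side r) := by
  have h : s = 0 ∨ s = 1 := by omega
  rcases h with rfl | rfl
  all_goals
    refine ⟨fun _ => r, ?_, ?_, ?_⟩
    · intro a b _
      cases a; cases b; rfl
    · intro a b
      simp [XGraph, XRel]
    · intro a
      refine ⟨hr, ?_⟩
      simp [XSide]

theorem XIn.edge {S : Set ℕ} {r z : ℕ} (hr : r ∈ S) (hz : z ∈ S) (hadj : G.Adj r z)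
    (hs : side r ≠ side z) : XIn G side S 2 (side r) := by
  refine ⟨fun a : Bool => if a then r else z, ?_, ?_, ?_⟩
  · intro (a : Bool) (b : Bool) h
    have := hadj.ne
    cases a <;> cases b
    · rfl
    · exact absurd h.symm this
    · exact absurd h this
    · rfl
  · intro (a : Bool) (b : Bool)
    refine Iff.trans ?_ (xadj_two a b).symm
    have := hadj.symm
    cases a <;> cases b <;> simp_all
  · intro (a : Bool)
    cases a
    · refine ⟨hz, ?_⟩
      show side z = (false == side r)
      revert hs
      cases side r <;> cases side z <;> simp
    · refine ⟨hr, ?_⟩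
      show side r = (true == side r)
      cases side r <;> rfl

theorem XIn.join {S1 S2 : Set ℕ} {n r : ℕ} (h1 : XIn G side S1 (n+2) (side r))
    (h2 : XIn G side S2 (n+2) (!side r)) (hr1 : r ∉ S1) (hr2 : r ∉ S2)
    (hb : ∀ x y, G.Adj x y → side x ≠ side y)
    (hd : ∀ x ∈ S1, ∀ y ∈ S2, x ≠ y ∧ ¬ G.Adj x y)
    (ha1 : ∀ x ∈ S1, side x ≠ side r → G.Adj r x)
    (ha2 : ∀ x ∈ S2, side x ≠ side r → G.Adj r x) :
    XIn G side (S1 ∪ S2 ∪ {r}) (n+3) (side r) := by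
  obtain ⟨f1, i1, e1, p1⟩ := h1
  obtain ⟨f2, i2, e2, p2⟩ := h2
  have hr1' : ∀ x, r ≠ f1 x := fun x h => hr1 (h ▸ (p1 x).1)
  have hr2' : ∀ x, r ≠ f2 x := fun x h => hr2 (h ▸ (p2 x).1)
  have hd' : ∀ x y, f1 x ≠ f2 y := fun x y => (hd _ (p1 x).1 _ (p2 y).1).1
  have hda : ∀ x y, ¬ G.Adj (f1 x) (f2 y) := fun x y => (hd _ (p1 x).1 _ (p2 y).1).2
  have hA1 : ∀ x, G.Adj r (f1 x) ↔ XSide (n+2) x = false := by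
    intro x
    have h := (p1 x).2
    constructor
    · intro ha
      have := hb _ _ ha
      revert h this
      cases XSide (n+2) x <;> cases side r <;> cases side (f1 x) <;> simp
    · intro hx
      refine ha1 _ (p1 x).1 ?_
      rw [h, hx]; cases side r <;> simp
  have hA2 : ∀ x, G.Adj r (f2 x) ↔ XSide (n+2) x = true := by
    intro x
    have h := (p2 x).2
    constructor
    · intro ha
      have := hb _ _ ha
      revert h this
      cases XSide (n+2) x <;> cases side r <;> cases side (f2 x) <;> simp
    · intro hx
      refine ha2 _ (p2 x).1 ?_
      rw [h, hx]; cases side r <;> simp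
  refine ⟨xrec r f2 f1, xrec_inj i2 i1 hr1' hr2' hd', xrec_adj e2 e1 hda hA1 hA2, ?_⟩
  refine xcases _ ?_ (fun x => ?_) (fun x => ?_)
  · refine ⟨Or.inr rfl, ?_⟩
    show side r = (true == side r)
    cases side r <;> rfl
  · refine ⟨Or.inl (Or.inr (p2 x).1), ?_⟩
    refine (p2 x).2.trans ?_
    show _ = ((!(XSide (n+2) x)) == side r)
    cases XSide (n+2) x <;> cases side r <;> rfl
  · exact ⟨Or.inl (Or.inl (p1 x).1), (p1 x).2⟩

end XInSec

section Main
variable (G : SimpleGraph ℕ)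

/-- bad sets -/
def Bad (F : Set ℕ) (u : ℕ) : Prop :=
  ∃ p1 ∈ F, ∃ p2 ∈ F, ∃ p3 ∈ F, ∃ p4 ∈ F, G.Adj u p1 ∧ G.Adj p1 p2 ∧ G.Adj p2 p3 ∧ G.Adj p3 p4 ∧
    ¬ G.Adj u p3 ∧ ¬ G.Adj p1 p4

variable {side : ℕ → Bool}

theorem no_two_bad (hb : ∀ x y, G.Adj x y → side x ≠ side y) (hP9 : PFree G 9) {u : ℕ}
    {F1 F2 : Set ℕ} (hF : ∀ x ∈ F1, ∀ y ∈ F2, ¬ G.Adj x y)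
    (h1 : Bad G F1 u) (h2 : Bad G F2 u) : False := by
  obtain ⟨p1, m1, p2, m2, p3, m3, p4, m4, a1, a2, a3, a4, b1, b2⟩ := h1
  obtain ⟨q1, n1, q2, n2, q3, n3, q4, n4, c1, c2, c3, c4, d1, d2⟩ := h2
  have hflip : ∀ x y, G.Adj x y → side y = !side x := by
    intro x y h
    have := hb x y h
    revert this
    cases side x <;> cases side y <;> simp
  have hs : ∀ x y, side x = side y → ¬ G.Adj x y := fun x y h h' => hb x y h' h
  have s1 := hflip _ _ a1
  have s2 := hflip _ _ a2
  have s3 := hflip _ _ a3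
  have s4 := hflip _ _ a4
  have t1 := hflip _ _ c1
  have t2 := hflip _ _ c2
  have t3 := hflip _ _ c3
  have t4 := hflip _ _ c4
  have hadj : ∀ a b : Fin 9, G.Adj (![p4, p3, p2, p1, u, q1, q2, q3, q4] a)
      (![p4, p3, p2, p1, u, q1, q2, q3, q4] b) ↔ (a.val + 1 = b.val ∨ b.val + 1 = a.val) := by
    have key : ∀ a b : Fin 9, a ≤ b → (G.Adj (![p4, p3, p2, p1, u, q1, q2, q3, q4] a)
      (![p4, p3, p2, p1, u, q1, q2, q3, q4] b) ↔ (a.val + 1 = b.val ∨ b.val + 1 = a.val)) := by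
      intro a b hab
      fin_cases a <;> fin_cases b <;> first
        | (exfalso; revert hab; decide)
        | (refine iff_of_true ?_ (by decide); first | exact a1 | exact a1.symm | exact a2.symm | exact a3.symm | exact a4.symm | exact c1 | exact c2 | exact c3 | exact c4)
        | (refine iff_of_false ?_ (by decide); first
            | exact SimpleGraph.irrefl _
            | exact fun h => b1 h.symm
            | exact fun h => b2 h.symm
            | exact d1
            | exact d2
            | (apply hF <;> assumption)
            | (apply hs; simp [s1, s2, s3, s4, t1, t2, t3, t4]))
    intro a b
    rcases le_total a b with h | h
    · exact key a b h
    · rw [SimpleGraph.adj_comm, key b a h]; tauto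
  apply hP9
  refine ⟨_, ?_, hadj⟩
  intro a b h
  have h2 : ∀ c : Fin 9, (a.val + 1 = c.val ∨ c.val + 1 = a.val) ↔ (b.val + 1 = c.val ∨ c.val + 1 = b.val) := by
    intro c
    rw [← hadj a c, ← hadj b c, h]
  clear hadj h
  revert a b
  decide

theorem lemL (hb : ∀ x y, G.Adj x y → side x ≠ side y) {E S : Set ℕ} {u q0 : ℕ}
    (hnb : ¬ Bad G E u) (hY : ∀ w, ReachIn G S q0 w → w ∈ E) (hu : G.Adj u q0) {g : ℕ}
    (hg : ReachIn G S q0 g) :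
    (side g ≠ side u → ∃ q, ReachIn G S q0 q ∧ G.Adj u q ∧ ∀ e ∈ E, G.Adj g e → G.Adj q e) ∧
    (side g = side u → ∃ q, ReachIn G S q0 q ∧ G.Adj u q ∧ G.Adj q g) := by
  refine hg.ind (fun g => (side g ≠ side u → ∃ q, ReachIn G S q0 q ∧ G.Adj u q ∧ ∀ e ∈ E, G.Adj g e → G.Adj q e) ∧
    (side g = side u → ∃ q, ReachIn G S q0 q ∧ G.Adj u q ∧ G.Adj q g)) ?_ ?_
  · exact ⟨fun _ => ⟨q0, ReachIn.rfl' hg.left, hu, fun _ _ h => h⟩, fun h => absurd h.symm (hb _ _ hu)⟩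
  · intro b c hrb hc hP hadj
    have hrc : ReachIn G S q0 c := hrb.trans' (ReachIn.of_adj hrb.right hc hadj)
    have hbc := hb _ _ hadj
    constructor
    · intro hs
      by_cases huc : G.Adj u c
      · exact ⟨c, hrc, huc, fun _ _ h => h⟩
      have hbu : side b = side u := by
        revert hbc hs; cases side b <;> cases side c <;> cases side u <;> simp
      obtain ⟨q, hq, huq, hqb⟩ := hP.2 hbu
      refine ⟨q, hq, huq, fun e he hce => ?_⟩
      by_contra hqe
      exact hnb ⟨q, hY q hq, b, hY b hrb, c, hY c hrc, e, he, huq, hqb, hadj, hce, huc, hqe⟩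
    · intro hs
      obtain ⟨q, hq, huq, hqb⟩ := hP.1 (fun h => hbc (h.trans hs.symm))
      exact ⟨q, hq, huq, hqb c (hY c hrc) hadj⟩

theorem lemA (hb : ∀ x y, G.Adj x y → side x ≠ side y) {x J f u z i g : ℕ}
    (hnb : ¬ Bad G {w | ReachIn G (DD G x J) f w} u)
    (hg : ReachIn G (DD G x J) f g) (hug : G.Adj u g) (hz : ReachIn G (DD G x J) f z)
    (hsz : side z ≠ side u) (hzi : (algoCol G z).index = i) (hi : 2 ≤ i)
    (hq : ∀ q, ReachIn G (DD G x J) f q → ¬ UnivS G side x i z q) : G.Adj u z := by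
  by_contra huz
  have hzD := hz.right
  have hiJ : i ≤ J := by rw [← hzi]; exact hzD.2.2
  have hsub : DD G x (i-1) ∪ {z} ⊆ DD G x J := by
    rintro w (hw | hw)
    · exact DD_mono G le_rfl (by omega) hw
    · have : w = z := hw
      rw [this]; exact hzD
  have hCE : ∀ e, ReachIn G (DD G x (i-1) ∪ {z}) z e → ReachIn G (DD G x J) f e :=
    fun e he => hz.trans' (he.mono hsub)
  have hzz : z ∈ DD G x (i-1) ∪ {z} := Or.inr rfl
  by_cases hC : ∃ q0, ReachIn G (DD G x (i-1) ∪ {z}) z q0 ∧ G.Adj u q0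
  · obtain ⟨q0, hq0, huq0⟩ := hC
    obtain ⟨q, hq1, huq, hqN⟩ := (lemL G hb hnb (fun w hw => hCE w (hq0.trans' hw)) huq0 hq0.symm').1 hsz
    have hqz : q ≠ z := fun h => huz (h ▸ huq)
    have hqD : q ∈ DD G x (i-1) := hq1.right.resolve_right hqz
    obtain ⟨f1, f2, g1, g2, -, -, -, -, -, -, a1, a2, r1, r2, nr⟩ :=
      split G hb (v := z) (j := i - 1) (by omega) (by omega) (τ := x) hzD.1.le
    apply nr
    have e1 : G.Adj q g1 := hqN g1 (hCE g1 (ReachIn.of_adj hzz (Or.inl r1.right) a1)) a1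
    have e2 : G.Adj q g2 := hqN g2 (hCE g2 (ReachIn.of_adj hzz (Or.inl r2.right) a2)) a2
    exact r1.trans' ((ReachIn.of_adj r1.right hqD e1.symm).trans'
      ((ReachIn.of_adj hqD r2.right e2).trans' r2.symm'))
  · push Not at hC
    obtain ⟨q, hq1, huq, hqN⟩ := (lemL G hb hnb (fun w hw => hg.trans' hw) hug (hg.symm'.trans' hz)).1 hsz
    have hqE := hg.trans' hq1
    refine hq q hqE ?_
    intro e he hse
    have huq' := hb _ _ huq
    have : (side e = side u → G.Adj q e) ∧
        (side e ≠ side u → ∀ e', ReachIn G (DD G x J) f e' → G.Adj e e' → G.Adj q e') := by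
      refine he.ind (fun e => (side e = side u → G.Adj q e) ∧
        (side e ≠ side u → ∀ e', ReachIn G (DD G x J) f e' → G.Adj e e' → G.Adj q e')) ?_ ?_
      · exact ⟨fun h => absurd h hsz, fun _ => hqN⟩
      · intro b c hrb hc hP hadj
        have hbc := hb _ _ hadj
        have hrc := hrb.trans' (ReachIn.of_adj hrb.right hc hadj)
        constructor
        · intro hs
          exact hP.2 (fun h => hbc (h.trans hs.symm)) c (hCE c hrc) hadj
        · intro hs e' he' hce
          have hbu : side b = side u := by
            revert hbc hs; cases side b <;> cases side c <;> cases side u <;> simp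
          by_contra hqe
          exact hnb ⟨q, hqE, b, hCE b hrb, c, hCE c hrc, e', he', huq, hP.1 hbu, hadj, hce, hC c hrc, hqe⟩
    apply this.1
    revert hse huq'; cases side e <;> cases side q <;> cases side u <;> simp

theorem lemT (hb : ∀ x y, G.Adj x y → side x ≠ side y) (hP9 : PFree G 9) {x m : ℕ}
    (hNU : ∀ q z i, ReachIn G (DD G x m ∪ {x}) x q → ReachIn G (DD G x m ∪ {x}) x z → z < x →
      algoCol G z = PalColor.a i → win m ≤ i → ¬ UnivS G side x i z q) (r : ℕ) :
    ∀ u j, u ≤ x → ReachIn G (DD G x m ∪ {x}) x u → algoCol G u = PalColor.a j → j ≤ m →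
      win m + 2 * r ≤ j →
      XIn G side {z | ReachIn G (DD G x (j-1) ∪ {u}) u z ∧ ∃ i : ℕ, algoCol G z = PalColor.a i ∧ win m ≤ i}
        (r+1) (side u) := by
  induction r with
  | zero =>
    intro u j _ hu hc _ hw
    refine XIn.single G side le_rfl ⟨ReachIn.rfl' (Or.inr rfl), j, hc, ?_⟩
    simpa using hw
  | succ r ih =>
    intro u j hux hu hc hjm hw
    push_cast at hw
    have hwg := win_gt m
    have hj4 : 4 ≤ j := by
      have h0 : (0:ℝ) ≤ r := Nat.cast_nonneg r
      have : (3:ℝ) < j := by linarith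
      have : 3 < j := by exact_mod_cast this
      omega
    have hidx : ∀ v i, algoCol G v = PalColor.a i → (algoCol G v).index = i := by
      intro v i h; rw [h]; rfl
    have mem : ∀ v i, v < x → algoCol G v = PalColor.a i → ∀ i', i ≤ i' → v ∈ DD G x i' := by
      intro v i hv h i' hi
      exact ⟨hv, one_le_index G v, by rw [hidx v i h]; exact hi⟩
    -- choose the good component
    have hgood : ∃ f g, f < u ∧ algoCol G f = PalColor.a (j-1) ∧ G.Adj u g ∧
        ReachIn G (DD G x (j-1)) f g ∧ ¬ Bad G {w | ReachIn G (DD G x (j-1)) f w} u := by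
      obtain ⟨f1, f2, g1, g2, l1, l2, c1, c2, -, -, a1, a2, r1, r2, nr⟩ :=
        split G hb (v := u) (j := j - 1) (by rw [hidx u j hc]; omega) (by omega) hux
      by_contra hcon
      push Not at hcon
      refine no_two_bad G hb hP9 ?_ (hcon f1 g1 l1 c1 a1 r1) (hcon f2 g2 l2 c2 a2 r2)
      intro p hp q hq hpq
      have hp : ReachIn G (DD G x (j-1)) f1 p := hp
      have hq : ReachIn G (DD G x (j-1)) f2 q := hq
      exact nr (hp.trans' ((ReachIn.of_adj hp.right hq.right hpq).trans' hq.symm'))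
    obtain ⟨f, g, hfu, hcf, hug, hfg, hnb⟩ := hgood
    have hfx : f < x := by omega
    have hpair : ∃ z1 z2, z1 < f ∧ z2 < f ∧ algoCol G z1 = PalColor.a (j-2) ∧ algoCol G z2 = PalColor.a (j-2) ∧
        side z1 = side u ∧ side z2 ≠ side u ∧ ReachIn G (DD G x (j-1)) f z1 ∧ ReachIn G (DD G x (j-1)) f z2 ∧
        ¬ ReachIn G (DD G x (j-2)) z1 z2 := by
      obtain ⟨h1, h2, k1, k2, l1, l2, c1, c2, s1, s2, a1, a2, r1, r2, nr⟩ :=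
        split G hb (v := f) (j := j - 2) (by rw [hidx f _ hcf]; omega) (by omega) hfx.le
      have hsub : DD G x (j-2) ⊆ DD G x (j-1) := DD_mono G le_rfl (by omega)
      have q1 : ReachIn G (DD G x (j-1)) f h1 :=
        (ReachIn.of_adj (mem f _ hfx hcf _ le_rfl) (hsub r1.right) a1).trans' (r1.mono hsub).symm'
      have q2 : ReachIn G (DD G x (j-1)) f h2 :=
        (ReachIn.of_adj (mem f _ hfx hcf _ le_rfl) (hsub r2.right) a2).trans' (r2.mono hsub).symm'
      by_cases hs : side f = side u
      · exact ⟨h1, h2, l1, l2, c1, c2, s1.trans hs, fun h => s2 (h.trans hs.symm), q1, q2, nr⟩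
      · refine ⟨h2, h1, l2, l1, c2, c1, ?_, fun h => hs (s1.symm.trans h), q2, q1, fun h => nr h.symm'⟩
        revert s2 hs; cases side h2 <;> cases side f <;> cases side u <;> simp
    obtain ⟨z1, z2, l1, l2, c1, c2, s1, s2, q1, q2, nr⟩ := hpair
    have hsubf : DD G x (j-1) ⊆ DD G x m ∪ {x} := fun w hw => Or.inl (DD_mono G le_rfl (by omega) hw)
    have hreg : ∀ z, ReachIn G (DD G x (j-1)) f z → ReachIn G (DD G x m ∪ {x}) x z := by
      intro z hz
      refine hu.trans' ((ReachIn.of_adj hu.right (hsubf hfg.right) hug).trans' ?_)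
      exact ((hfg.symm'.trans' hz).mono hsubf)
    have hadjE : ∀ z i, ReachIn G (DD G x (j-1)) f z → algoCol G z = PalColor.a i → win m ≤ i →
        side z ≠ side u → G.Adj u z := by
      intro z i hz hci hwi hsz
      refine lemA G hb hnb hfg hug hz hsz (hidx z i hci) (two_le_of_win hwi) ?_
      intro q hq
      exact hNU q z i (hreg q hq) (hreg z hz) hz.right.1 hci hwi
    have hcast : ((j - 2 : ℕ) : ℝ) = (j:ℝ) - 2 := by
      rw [Nat.cast_sub (by omega)]; norm_num
    have hw2 : win m ≤ ((j-2 : ℕ) : ℝ) := by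
      rw [hcast]; have h0 : (0:ℝ) ≤ r := Nat.cast_nonneg r
      linarith
    let S : ℕ → Set ℕ := fun v => {z | ReachIn G (DD G x (j-2)) v z ∧ ∃ i : ℕ, algoCol G z = PalColor.a i ∧ win m ≤ i}
    have hS : ∀ v, v < f → algoCol G v = PalColor.a (j-2) → ReachIn G (DD G x (j-1)) f v →
        XIn G side (S v) (r+1) (side v) := by
      intro v hv hcv hfv
      refine XIn.mono G side ?_ (ih v (j-2) (by omega) (hreg v hfv) hcv (by omega) (by rw [hcast]; linarith))
      rintro z ⟨hz1, hz2⟩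
      refine ⟨hz1.mono ?_, hz2⟩
      rintro w (hw | hw)
      · exact DD_mono G le_rfl (by omega) hw
      · have : w = v := hw
        rw [this]; exact mem v _ (by omega) hcv _ le_rfl
    have hSE : ∀ v, ReachIn G (DD G x (j-1)) f v → ∀ z ∈ S v, ReachIn G (DD G x (j-1)) f z := by
      intro v hv z hz
      exact hv.trans' (hz.1.mono (DD_mono G le_rfl (by omega)))
    have hSadj : ∀ v, ReachIn G (DD G x (j-1)) f v → ∀ z ∈ S v, side z ≠ side u → G.Adj u z := by
      intro v hv z hz hs
      obtain ⟨i, hci, hwi⟩ := hz.2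
      exact hadjE z i (hSE v hv z hz) hci hwi hs
    have hSu : ∀ v, u ∉ S v := by
      intro v hv
      have := hv.1.right.2.2
      rw [hidx u j hc] at this
      omega
    have hT : ∀ v, ReachIn G (DD G x (j-1)) f v → S v ⊆ {z | ReachIn G (DD G x (j-1) ∪ {u}) u z ∧ ∃ i : ℕ, algoCol G z = PalColor.a i ∧ win m ≤ i} := by
      intro v hv z hz
      refine ⟨?_, hz.2⟩
      refine (ReachIn.of_adj (Or.inr rfl) (Or.inl hfg.right) hug).trans' ?_
      exact (hfg.symm'.trans' (hSE v hv z hz)).mono Set.subset_union_left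
    have hTu : u ∈ {z | ReachIn G (DD G x (j-1) ∪ {u}) u z ∧ ∃ i : ℕ, algoCol G z = PalColor.a i ∧ win m ≤ i} := by
      refine ⟨ReachIn.rfl' (Or.inr rfl), j, hc, ?_⟩
      have h0 : (0:ℝ) ≤ r := Nat.cast_nonneg r
      linarith
    cases r with
    | zero =>
      have hz2 : z2 ∈ S z2 := ⟨ReachIn.rfl' (mem z2 _ (by omega) c2 _ le_rfl), j-2, c2, hw2⟩
      exact XIn.edge G side hTu (hT z2 q2 hz2) (hSadj z2 q2 z2 hz2 s2) (fun h => s2 h.symm)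
    | succ n =>
      have X1 := hS z1 l1 c1 q1
      have X2 := hS z2 l2 c2 q2
      rw [s1] at X1
      have s2' : side z2 = !side u := by
        revert s2; cases side z2 <;> cases side u <;> simp
      rw [s2'] at X2
      refine XIn.mono G side ?_ (XIn.join G side X1 X2 (hSu z1) (hSu z2) hb ?_ (hSadj z1 q1) (hSadj z2 q2))
      · rintro w ((hw | hw) | hw)
        · exact hT z1 q1 hw
        · exact hT z2 q2 hw
        · have : w = u := hw
          rw [this]; exact hTu
      · rintro y1 hy1 y2 hy2
        refine ⟨fun h => nr ?_, fun h => nr ?_⟩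
        · exact hy1.1.trans' (h ▸ hy2.1.symm')
        · exact hy1.1.trans' ((ReachIn.of_adj hy1.1.right hy2.1.right h).trans' hy2.1.symm')

end Main

theorem xside_ex (n : ℕ) : ∀ b, ∃ a : XV (n+2), XSide (n+2) a = b := by
  induction n with
  | zero => intro b; exact ⟨(b : Bool), rfl⟩
  | succ n ih =>
    intro b
    obtain ⟨a, ha⟩ := ih b
    exact ⟨xr a, ha⟩

section Main2
variable (G : SimpleGraph ℕ) {side : ℕ → Bool}

theorem XIn.both {S : Set ℕ} {n : ℕ} {sd : Bool} (h : XIn G side S (n+2) sd) (b : Bool) :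
    ∃ y ∈ S, side y = b := by
  obtain ⟨f, _, _, h⟩ := h
  obtain ⟨a, ha⟩ := xside_ex n (b == sd)
  refine ⟨f a, (h a).1, ?_⟩
  rw [(h a).2, ha]
  cases b <;> cases sd <;> rfl

theorem lemU (hb : ∀ x y, G.Adj x y → side x ≠ side y) {τ u j u' s : ℕ} (hu : u < τ)
    (hc : algoCol G u = PalColor.a j ∨ algoCol G u = PalColor.b j) (hj : 2 ≤ j)
    (hU : UnivS G side τ j u u')
    (ih : ∀ x, algoCol G x = PalColor.a (j-1) →
      XIn G side {y | ReachIn G (DD G (x+1) (j-1)) x y} (s+1) (side x)) :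
    XIn G side ({y | ReachIn G (DD G τ (j-1) ∪ {u}) u y} ∪ {u'}) (s+2) (side u') := by
  have hidx : (algoCol G u).index = (j - 1) + 1 := by
    rcases hc with h | h <;> rw [h] <;> show j = _ <;> omega
  have hpair : ∃ z1 z2, algoCol G z1 = PalColor.a (j-1) ∧ algoCol G z2 = PalColor.a (j-1) ∧
      z1 < τ ∧ z2 < τ ∧ side z1 = side u' ∧ side z2 ≠ side u' ∧
      ReachIn G (DD G τ (j-1) ∪ {u}) u z1 ∧ ReachIn G (DD G τ (j-1) ∪ {u}) u z2 ∧
      ¬ ReachIn G (DD G τ (j-1)) z1 z2 := by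
    obtain ⟨h1, h2, k1, k2, l1, l2, c1, c2, s1, s2, a1, a2, r1, r2, nr⟩ :=
      split G hb hidx (by omega) hu.le
    have q1 : ReachIn G (DD G τ (j-1) ∪ {u}) u h1 :=
      (ReachIn.of_adj (Or.inr rfl) (Or.inl r1.right) a1).trans' (r1.mono Set.subset_union_left).symm'
    have q2 : ReachIn G (DD G τ (j-1) ∪ {u}) u h2 :=
      (ReachIn.of_adj (Or.inr rfl) (Or.inl r2.right) a2).trans' (r2.mono Set.subset_union_left).symm'
    by_cases hs : side u = side u'
    · exact ⟨h1, h2, c1, c2, by omega, by omega, s1.trans hs, fun h => s2 (h.trans hs.symm), q1, q2, nr⟩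
    · refine ⟨h2, h1, c2, c1, by omega, by omega, ?_, fun h => hs (s1.symm.trans h), q2, q1, fun h => nr h.symm'⟩
      revert s2 hs; cases side h2 <;> cases side u <;> cases side u' <;> simp
  obtain ⟨z1, z2, c1, c2, l1, l2, s1, s2, q1, q2, nr⟩ := hpair
  cases s with
  | zero =>
    exact XIn.edge G side (Or.inr rfl) (Or.inl q2) (hU z2 q2 s2) (fun h => s2 h.symm)
  | succ n =>
    let F : ℕ → Set ℕ := fun v => {y | ReachIn G (DD G τ (j-1)) v y}
    have hX : ∀ v, algoCol G v = PalColor.a (j-1) → v < τ → XIn G side (F v) (n+2) (side v) := by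
      intro v hv hvt
      refine XIn.mono G side ?_ (ih v hv)
      intro y hy
      have hy : ReachIn G (DD G (v+1) (j-1)) v y := hy
      exact hy.mono (DD_mono G (by omega) le_rfl)
    have X1 := hX z1 c1 l1
    have X2 := hX z2 c2 l2
    rw [s1] at X1
    have s2' : side z2 = !side u' := by
      revert s2; cases side z2 <;> cases side u' <;> simp
    rw [s2'] at X2
    have hFT : ∀ v, ReachIn G (DD G τ (j-1) ∪ {u}) u v → ∀ y ∈ F v, ReachIn G (DD G τ (j-1) ∪ {u}) u y := by
      intro v hv y hy
      have hy : ReachIn G (DD G τ (j-1)) v y := hy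
      exact hv.trans' (hy.mono Set.subset_union_left)
    have hd : ∀ x ∈ F z1, ∀ y ∈ F z2, x ≠ y ∧ ¬ G.Adj x y := by
      intro y1 hy1 y2 hy2
      have hy1 : ReachIn G (DD G τ (j-1)) z1 y1 := hy1
      have hy2 : ReachIn G (DD G τ (j-1)) z2 y2 := hy2
      refine ⟨fun h => nr ?_, fun h => nr ?_⟩
      · exact hy1.trans' (h ▸ hy2.symm')
      · exact hy1.trans' ((ReachIn.of_adj hy1.right hy2.right h).trans' hy2.symm')
    refine XIn.mono G side ?_ (XIn.join G side X1 X2 ?_ ?_ hb hd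
      (fun y hy => hU y (hFT z1 q1 y hy)) (fun y hy => hU y (hFT z2 q2 y hy)))
    · rintro w ((hw | hw) | hw)
      · exact Or.inl (hFT z1 q1 w hw)
      · exact Or.inl (hFT z2 q2 w hw)
      · exact Or.inr hw
    · intro h
      obtain ⟨y, hy, hsy⟩ := XIn.both G X2 (!side u')
      exact (hd _ h _ hy).2 (hU y (hFT z2 q2 y hy) (by rw [hsy]; simp))
    · intro h
      obtain ⟨y, hy, hsy⟩ := XIn.both G X1 (!side u')
      exact (hd _ hy _ h).2 (hU y (hFT z1 q1 y hy) (by rw [hsy]; simp)).symm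

theorem sqrt_ge {s m : ℕ} (h : 2 * s^2 ≤ m) : (2 * s : ℝ) ≤ Real.sqrt (2 * m) := by
  apply Real.le_sqrt_of_sq_le
  have : (2 * (s:ℝ)^2) ≤ m := by exact_mod_cast h
  nlinarith

theorem win_arith {s m j : ℕ} (h : 2 * (s+1)^2 ≤ m) (hw : win m ≤ j) : 2 * s^2 ≤ j - 1 := by
  have h1 := sqrt_ge h
  unfold win at hw
  have h2 := Real.sq_sqrt (show (0:ℝ) ≤ 2 * m by positivity)
  push_cast at h1
  have h0 : (0:ℝ) ≤ s := Nat.cast_nonneg s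
  have : (2 * (s:ℝ)^2 + 1) ≤ j := by
    nlinarith [mul_nonneg (sub_nonneg.2 h1) (sub_nonneg.2 h1), mul_nonneg (sub_nonneg.2 h1) h0]
  have : 2 * s^2 + 1 ≤ j := by exact_mod_cast this
  omega

theorem lemThird (hb : ∀ x y, G.Adj x y → side x ≠ side y) {t m s : ℕ}
    (hT : Third G side t m) (hm : 2 * (s+2)^2 ≤ m)
    (ih : ∀ x m, algoCol G x = PalColor.a m → 2 * (s+1)^2 ≤ m →
      XIn G side {y | ReachIn G (DD G (x+1) m) x y} (s+1) (side x)) :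
    XIn G side {y | ReachIn G (DD G t m ∪ {t}) t y} (s+2) (!side t) := by
  obtain ⟨u, u', j, hu, hu', hs, hut, hc, hw, hU⟩ := hT
  have hj := two_le_of_win hw
  rw [univ_iff G hb hut hc hj] at hU
  have hju : (algoCol G u).index = j := by rcases hc with h | h <;> rw [h] <;> rfl
  have huD : u ∈ DD G t m := hu.right.resolve_right (fun h => by
    have : u = t := h
    omega)
  have hjm : j ≤ m := by rw [← hju]; exact huD.2.2
  have hs' : side u' = !side t := by
    revert hs; cases side u' <;> cases side t <;> simp
  rw [← hs']
  refine XIn.mono G side ?_ (lemU G hb hut hc hj hU (fun x hx => ih x _ hx (win_arith hm hw)))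
  rintro y (hy | hy)
  · have hy : ReachIn G (DD G t (j-1) ∪ {u}) u y := hy
    refine hu.trans' (hy.mono ?_)
    rintro w (hw | hw)
    · exact Or.inl (DD_mono G le_rfl (by omega) hw)
    · have : w = u := hw
      rw [this]; exact hu.right
  · have : y = u' := hy
    rw [this]; exact hu'

theorem lemS (hb : ∀ x y, G.Adj x y → side x ≠ side y) (hP9 : PFree G 9) (s : ℕ) :
    ∀ x m, algoCol G x = PalColor.a m → 2 * s^2 ≤ m →
      XIn G side {y | ReachIn G (DD G (x+1) m) x y} s (side x) := by
  induction s with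
  | zero =>
    intro x m hc _
    refine XIn.single G side (by omega) (ReachIn.rfl' ⟨by omega, one_le_index G x, ?_⟩)
    rw [hc]; exact le_rfl
  | succ s ih =>
    intro x m hc hm
    have hxD : x ∈ DD G (x+1) m := ⟨by omega, one_le_index G x, by rw [hc]; exact le_rfl⟩
    cases s with
    | zero => exact XIn.single G side (by omega) (ReachIn.rfl' hxD)
    | succ s =>
      have hDx : DD G x m ∪ {x} ⊆ DD G (x+1) m := by
        rintro w (hw | hw)
        · exact DD_mono G (by omega) le_rfl hw
        · have : w = x := hw
          rw [this]; exact hxD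
      rcases col_a G hb hc with ⟨z, hzx, hz, hsz, hcz⟩ | hT
      · have h1 := lemThird G hb (col_c G hb hcz) hm ih
        have hs' : side x = !side z := by
          revert hsz; cases side x <;> cases side z <;> simp
        rw [hs']
        refine XIn.mono G side ?_ h1
        intro y hy
        have hy : ReachIn G (DD G z m ∪ {z}) z y := hy
        refine (hz.mono hDx).trans' (hy.mono ?_)
        rintro w (hw | hw)
        · exact DD_mono G (by omega) le_rfl hw
        · have : w = z := hw
          rw [this]; exact hDx hz.right
      · by_cases hNU : ∀ q z i, ReachIn G (DD G x m ∪ {x}) x q → ReachIn G (DD G x m ∪ {x}) x z → z < x →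
          algoCol G z = PalColor.a i → win m ≤ i → ¬ UnivS G side x i z q
        · have h1 := lemT G hb hP9 hNU (s+1) x m le_rfl (ReachIn.rfl' (Or.inr rfl)) hc le_rfl ?_
          · refine XIn.mono G side ?_ h1
            rintro y ⟨hy, -⟩
            refine hy.mono ?_
            rintro w (hw | hw)
            · exact hDx (Or.inl (DD_mono G le_rfl (by omega) hw))
            · exact hDx (Or.inr hw)
          · have := sqrt_ge hm
            unfold win
            push_cast at this ⊢
            linarith
        · push Not at hNU
          obtain ⟨q, z, i, hq, hz, hzx, hcz, hwi, hU⟩ := hNU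
          have hi := two_le_of_win hwi
          by_cases hs : side x = side q
          · rw [hs]
            have hzD : z ∈ DD G x m := hz.right.resolve_right (fun h => by
              have : z = x := h
              omega)
            have him : i ≤ m := by
              have := hzD.2.2
              rw [hcz] at this; exact this
            refine XIn.mono G side ?_ (lemU G hb hzx (Or.inl hcz) hi hU
              (fun v hv => ih v _ hv (win_arith hm hwi)))
            rintro y (hy | hy)
            · have hy : ReachIn G (DD G x (i-1) ∪ {z}) z y := hy
              refine (hz.mono hDx).trans' (hy.mono ?_)
              rintro w (hw | hw)
              · exact hDx (Or.inl (DD_mono G le_rfl (by omega) hw))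
              · have : w = z := hw
                rw [this]; exact hDx hz.right
            · have : y = q := hy
              rw [this]; exact hq.mono hDx
          · exact absurd ⟨z, q, i, hz, hq, hs, hzx, Or.inl hcz, hwi,
              (univ_iff G hb hzx (Or.inl hcz) hi q).2 hU⟩ hT

theorem XIn.emb {S : Set ℕ} {s : ℕ} {sd : Bool} (h : XIn G side S s sd) :
    Nonempty (XGraph s ↪g G) := by
  obtain ⟨f, h1, h2, _⟩ := h
  exact ⟨⟨⟨f, h1⟩, fun {a b} => h2 a b⟩⟩

theorem final_X (hb : ∀ x y, G.Adj x y → side x ≠ side y) (hP9 : PFree G 9) {v k s : ℕ}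
    (hv : (algoCol G v).index = k) (hs : 2 * s^2 ≤ k) : Nonempty (XGraph s ↪g G) := by
  cases hc : algoCol G v with
  | a i =>
    rw [hc] at hv
    have : i = k := hv
    subst this
    exact XIn.emb G (lemS G hb hP9 s v i hc hs)
  | b i =>
    rw [hc] at hv
    have : i = k := hv
    subst this
    obtain ⟨z, hz⟩ := col_b G hc
    exact XIn.emb G (lemS G hb hP9 s z i hz hs)
  | c i =>
    rw [hc] at hv
    have : i = k := hv
    subst this
    by_cases h1 : s ≤ 1
    · exact XIn.emb G (XIn.single G side (S := {v}) h1 rfl)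
    · obtain ⟨s, rfl⟩ : ∃ s', s = s' + 2 := ⟨s - 2, by omega⟩
      exact XIn.emb G (lemThird G hb (col_c G hb hc) hs (fun x m hx hm => lemS G hb hP9 (s+1) x m hx hm))

end Main2

theorem three_k (G : SimpleGraph ℕ) (n k : ℕ) (hbound : ∀ v < n, (algoCol G v).index ≤ k) :
    ((Finset.range n).image (algoCol G)).card ≤ 3 * k := by
  have hsub : (Finset.range n).image (algoCol G) ⊆
      (Finset.Icc 1 k).image PalColor.a ∪ (Finset.Icc 1 k).image PalColor.b ∪
        (Finset.Icc 1 k).image PalColor.c := by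
    intro c hc
    rw [Finset.mem_image] at hc
    obtain ⟨v, hv, rfl⟩ := hc
    have h1 := one_le_index G v
    have h2 := hbound v (Finset.mem_range.1 hv)
    cases hc : algoCol G v with
    | a i => rw [hc] at h1 h2; simp only [Finset.mem_union]; left; left; exact Finset.mem_image_of_mem _ (Finset.mem_Icc.2 ⟨h1, h2⟩)
    | b i => rw [hc] at h1 h2; simp only [Finset.mem_union]; left; right; exact Finset.mem_image_of_mem _ (Finset.mem_Icc.2 ⟨h1, h2⟩)
    | c i => rw [hc] at h1 h2; simp only [Finset.mem_union]; right; exact Finset.mem_image_of_mem _ (Finset.mem_Icc.2 ⟨h1, h2⟩)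
  have hk : (Finset.Icc 1 k).card = k := by simp
  have c1 := Finset.card_image_le (s := Finset.Icc 1 k) (f := PalColor.a)
  have c2 := Finset.card_image_le (s := Finset.Icc 1 k) (f := PalColor.b)
  have c3 := Finset.card_image_le (s := Finset.Icc 1 k) (f := PalColor.c)
  have := Finset.card_le_card hsub
  have u1 := Finset.card_union_le ((Finset.Icc 1 k).image PalColor.a ∪ (Finset.Icc 1 k).image PalColor.b) ((Finset.Icc 1 k).image PalColor.c)
  have u2 := Finset.card_union_le ((Finset.Icc 1 k).image PalColor.a) ((Finset.Icc 1 k).image PalColor.b)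
  omega

theorem xfinite : ∀ k, Finite (XV k)
  | 0 => inferInstanceAs (Finite PUnit)
  | 1 => inferInstanceAs (Finite PUnit)
  | 2 => inferInstanceAs (Finite Bool)
  | (n+3) => by
    have := xfinite (n+2)
    exact inferInstanceAs (Finite (Option (XV (n+2) ⊕ XV (n+2))))

theorem xroot_side : ∀ k, XSide k (XRoot k) = true
  | 0 => rfl
  | 1 => rfl
  | 2 => rfl
  | (_+3) => rfl

theorem xroot_adj (n : ℕ) : ∀ a, XSide (n+2) a = false → (XGraph (n+2)).Adj (XRoot (n+2)) a := by
  cases n with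
  | zero =>
    intro (a : Bool) ha
    have ha : a = false := ha
    subst ha
    exact (xadj_two true false).2 (by decide)
  | succ n =>
    refine xcases _ ?_ (fun x => ?_) (fun x => ?_)
    · intro h; exact absurd h (by simp [xn, XSide])
    · intro h
      refine (xadj_nl x).2 ?_
      have h : (!(XSide (n+2) x)) = false := h
      simpa using h
    · intro h
      exact (xadj_nr x).2 h

theorem xnbr (n : ℕ) : ∀ a : XV (n+2), ∃ b, (XGraph (n+2)).Adj a b := by
  induction n with
  | zero =>
    intro (a : Bool)
    exact ⟨(!a : Bool), (xadj_two a (!a)).2 (by cases a <;> decide)⟩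
  | succ n ih =>
    refine xcases _ ?_ (fun x => ?_) (fun x => ?_)
    · obtain ⟨a, ha⟩ := xside_ex n true
      exact ⟨xl a, (xadj_nl a).2 ha⟩
    · obtain ⟨b, hb⟩ := ih x
      exact ⟨xl b, (xadj_ll x b).2 hb⟩
    · obtain ⟨b, hb⟩ := ih x
      exact ⟨xr b, (xadj_rr x b).2 hb⟩

section Online
variable (A : OnlineAlg)

/-- color of vertex `i` -/
def cc (H : SimpleGraph ℕ) (i : ℕ) : ℕ := A i (H.comap (Fin.val : Fin (i+1) → ℕ))

theorem cc_congr {H H' : SimpleGraph ℕ} {i : ℕ}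
    (h : ∀ a b, a ≤ i → b ≤ i → (H.Adj a b ↔ H'.Adj a b)) : cc A H i = cc A H' i := by
  unfold cc
  congr 1
  ext a b
  exact h a b (by omega) (by omega)

theorem cc_proper (hA : IsProperAlg A) {H : SimpleGraph ℕ} {a b : ℕ} (h : H.Adj a b) :
    cc A H a ≠ cc A H b := by
  have := hA (max a b + 1) (H.comap Fin.val) ⟨a, by omega⟩ ⟨b, by omega⟩ h
  exact this

/-- extension of histories -/
def HExt (H : SimpleGraph ℕ) (t : ℕ) (H' : SimpleGraph ℕ) (t' : ℕ) : Prop :=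
  t ≤ t' ∧ (∀ a b, a < t → (H'.Adj a b ↔ H.Adj a b)) ∧ ∀ a b, H'.Adj a b → a < t' ∧ b < t'

theorem HExt.trans {H H' H'' : SimpleGraph ℕ} {t t' t'' : ℕ} (h1 : HExt H t H' t')
    (h2 : HExt H' t' H'' t'') : HExt H t H'' t'' :=
  ⟨h1.1.trans h2.1, fun a b ha => (h2.2.1 a b (by have := h1.1; omega)).trans (h1.2.1 a b ha), h2.2.2⟩

/-- a copy of `X_k` -/
structure Place (k : ℕ) (H : SimpleGraph ℕ) (t t' : ℕ) (φ : XV k → ℕ) : Prop where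
  inj : Function.Injective φ
  adj : ∀ a b, H.Adj (φ a) (φ b) ↔ (XGraph k).Adj a b
  lo : ∀ a, t ≤ φ a
  hi : ∀ a, φ a < t'
  sur : ∀ i, t ≤ i → i < t' → ∃ a, φ a = i

/-- colors of a side -/
def Col {k : ℕ} (H : SimpleGraph ℕ) (φ : XV k → ℕ) (b : Bool) : Set ℕ :=
  {c | ∃ a, XSide k a = b ∧ cc A H (φ a) = c}

theorem Col_fin {k : ℕ} (H : SimpleGraph ℕ) (φ : XV k → ℕ) (b : Bool) : (Col A H φ b).Finite := by
  have := xfinite k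
  refine (Set.finite_range (fun a => cc A H (φ a))).subset ?_
  rintro c ⟨a, _, h⟩
  exact ⟨a, h⟩

theorem Col_congr {k : ℕ} {H H' : SimpleGraph ℕ} {φ : XV k → ℕ} {t : ℕ} (hφ : ∀ a, φ a < t)
    (h : ∀ a b, a < t → b < t → (H'.Adj a b ↔ H.Adj a b)) (b : Bool) :
    Col A H' φ b = Col A H φ b := by
  have : ∀ a, cc A H' (φ a) = cc A H (φ a) := fun a =>
    cc_congr A (fun x y hx hy => h x y (by have := hφ a; omega) (by have := hφ a; omega))
  unfold Col
  simp only [this]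

theorem HExt.place {k : ℕ} {H H' : SimpleGraph ℕ} {s t t' : ℕ} {φ : XV k → ℕ}
    (h : HExt H t H' t') (p : Place k H s t φ) : Place k H' s t φ :=
  ⟨p.inj, fun a b => (h.2.1 _ _ (p.hi a)).trans (p.adj a b), p.lo, p.hi, p.sur⟩

/-- add a vertex -/
def addV (H : SimpleGraph ℕ) (t : ℕ) (W : Set ℕ) : SimpleGraph ℕ :=
  SimpleGraph.fromRel (fun a b => H.Adj a b ∨ (a = t ∧ b ∈ W))

theorem addV_adj (H : SimpleGraph ℕ) (t : ℕ) (W : Set ℕ) (a b : ℕ) : (addV H t W).Adj a b ↔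
    a ≠ b ∧ (H.Adj a b ∨ (a = t ∧ b ∈ W) ∨ (b = t ∧ a ∈ W)) := by
  unfold addV
  rw [SimpleGraph.fromRel_adj, SimpleGraph.adj_comm H b a]
  tauto

theorem addV_lt (H : SimpleGraph ℕ) (t : ℕ) (W : Set ℕ) {a b : ℕ} (ha : a < t) (hb : b < t) :
    (addV H t W).Adj a b ↔ H.Adj a b := by
  rw [addV_adj]
  constructor
  · rintro ⟨_, h | ⟨h, _⟩ | ⟨h, _⟩⟩
    · exact h
    · omega
    · omega
  · intro h; exact ⟨h.ne, Or.inl h⟩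

theorem addV_t (H : SimpleGraph ℕ) (t : ℕ) (W : Set ℕ) (hW : ∀ w ∈ W, w < t)
    (hH : ∀ a b, H.Adj a b → a < t ∧ b < t) {b : ℕ} :
    (addV H t W).Adj t b ↔ b ∈ W := by
  rw [addV_adj]
  constructor
  · rintro ⟨hne, h | ⟨_, h⟩ | ⟨h, _⟩⟩
    · have := (hH _ _ h).1; omega
    · exact h
    · exact absurd h.symm hne
  · intro h
    exact ⟨by have := hW b h; omega, Or.inr (Or.inl ⟨rfl, h⟩)⟩

theorem addV_ext {H0 H : SimpleGraph ℕ} {t0 t : ℕ} {W : Set ℕ} (h : HExt H0 t0 H t)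
    (hW : ∀ w ∈ W, t0 ≤ w ∧ w < t) : HExt H0 t0 (addV H t W) (t+1) := by
  refine ⟨by have := h.1; omega, ?_, ?_⟩
  · intro a b ha
    rw [← h.2.1 a b ha, addV_adj]
    constructor
    · rintro ⟨_, h' | ⟨h', _⟩ | ⟨_, h'⟩⟩
      · exact h'
      · have := h.1; omega
      · have := hW a h'; omega
    · intro h'; exact ⟨h'.ne, Or.inl h'⟩
  · intro a b
    rw [addV_adj]
    rintro ⟨_, h' | ⟨h', h''⟩ | ⟨h', h''⟩⟩
    · have := h.2.2 a b h'; omega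
    · have := hW b h''; omega
    · have := hW a h''; omega

/-- supported below `t` -/
def Supp (H : SimpleGraph ℕ) (t : ℕ) : Prop := ∀ a b, H.Adj a b → a < t ∧ b < t

/-- the adversary forces many colors -/
def PP (k : ℕ) : Prop := ∀ H t, Supp H t → ∃ H' t' φ, HExt H t H' t' ∧ Place k H' t t' φ ∧
  k ≤ (Col A H' φ false).ncard + 1

/-- auxiliary adversary -/
def HH (k : ℕ) : Prop := ∀ S Z : Set ℕ, S.Finite → Z.Finite → S.ncard + 1 = k → (∃ z ∈ Z, z ∉ S) →
  ∀ H t, Supp H t → ∃ H' t' φ, HExt H t H' t' ∧ Place k H' t t' φ ∧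
  ((∃ c ∈ Col A H' φ true, c ∉ S) ∨ k ≤ (Col A H' φ false ∪ Z).ncard)

/-- two disjoint copies -/
structure Two (k : ℕ) (H : SimpleGraph ℕ) (t t' : ℕ) (φ1 φ2 : XV k → ℕ) : Prop where
  inj1 : Function.Injective φ1
  inj2 : Function.Injective φ2
  adj1 : ∀ a b, H.Adj (φ1 a) (φ1 b) ↔ (XGraph k).Adj a b
  adj2 : ∀ a b, H.Adj (φ2 a) (φ2 b) ↔ (XGraph k).Adj a b
  lo1 : ∀ a, t ≤ φ1 a
  lo2 : ∀ a, t ≤ φ2 a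
  hi1 : ∀ a, φ1 a < t'
  hi2 : ∀ a, φ2 a < t'
  disj : ∀ a b, φ1 a ≠ φ2 b
  nadj : ∀ a b, ¬ H.Adj (φ1 a) (φ2 b)
  sur : ∀ i, t ≤ i → i < t' → (∃ a, φ1 a = i) ∨ ∃ a, φ2 a = i

theorem Two.swap {k : ℕ} {H : SimpleGraph ℕ} {t t' : ℕ} {φ1 φ2 : XV k → ℕ}
    (h : Two k H t t' φ1 φ2) : Two k H t t' φ2 φ1 :=
  ⟨h.inj2, h.inj1, h.adj2, h.adj1, h.lo2, h.lo1, h.hi2, h.hi1, fun a b e => h.disj b a e.symm,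
    fun a b e => h.nadj b a e.symm, fun i h1 h2 => (h.sur i h1 h2).symm⟩

theorem Place.two {k : ℕ} {H H' : SimpleGraph ℕ} {t t1 t2 : ℕ} {φ1 φ2 : XV k → ℕ}
    (p1 : Place k H t t1 φ1) (e : HExt H t1 H' t2) (hH : Supp H t1) (p2 : Place k H' t1 t2 φ2)
    (ht : t ≤ t1) : Two k H' t t2 φ1 φ2 := by
  refine ⟨p1.inj, p2.inj, (e.place p1).adj, p2.adj, p1.lo, fun a => ht.trans (p2.lo a),
    fun a => (p1.hi a).trans_le e.1, p2.hi, ?_, ?_, ?_⟩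
  · intro a b h
    have := p1.hi a
    have := p2.lo b
    omega
  · intro a b h
    rw [e.2.1 _ _ (p1.hi a)] at h
    have := (hH _ _ h).2
    have := p2.lo b
    omega
  · intro i h1 h2
    by_cases hi : i < t1
    · exact Or.inl (p1.sur i h1 hi)
    · exact Or.inr (p2.sur i (by omega) h2)

/-- two copies with many colors -/
def QQ (k : ℕ) : Prop := ∀ H t, Supp H t → ∃ H' t' φ1 φ2, HExt H t H' t' ∧ Two k H' t t' φ1 φ2 ∧
  k ≤ (Col A H' φ1 true ∪ Col A H' φ2 false).ncard

theorem rootstep {n : ℕ} {H0 H : SimpleGraph ℕ} {t0 t : ℕ} {φ1 φ2 : XV (n+2) → ℕ}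
    (e : HExt H0 t0 H t) (p : Two (n+2) H t0 t φ1 φ2) :
    ∃ H' t' φ, HExt H0 t0 H' t' ∧ Place (n+3) H' t0 t' φ ∧
      Col A H φ1 true ∪ Col A H φ2 false = Col A H' φ false ∧
      Col A H φ1 false ∪ Col A H φ2 true ⊆ Col A H' φ true := by
  let W : Set ℕ := {w | (∃ a, XSide (n+2) a = true ∧ φ1 a = w) ∨ ∃ a, XSide (n+2) a = false ∧ φ2 a = w}
  have hW : ∀ w ∈ W, t0 ≤ w ∧ w < t := by
    rintro w (⟨a, _, rfl⟩ | ⟨a, _, rfl⟩)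
    · exact ⟨p.lo1 a, p.hi1 a⟩
    · exact ⟨p.lo2 a, p.hi2 a⟩
  have hlt : ∀ a b, a < t → b < t → ((addV H t W).Adj a b ↔ H.Adj a b) :=
    fun a b ha hb => addV_lt H t W ha hb
  have hWt : ∀ b, (addV H t W).Adj t b ↔ b ∈ W := fun b => addV_t H t W (fun w hw => (hW w hw).2) e.2.2
  have C1 : ∀ b, Col A (addV H t W) φ1 b = Col A H φ1 b := Col_congr A p.hi1 hlt
  have C2 : ∀ b, Col A (addV H t W) φ2 b = Col A H φ2 b := Col_congr A p.hi2 hlt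
  refine ⟨addV H t W, t+1, xrec t φ1 φ2, addV_ext e hW, ⟨?_, ?_, ?_, ?_, ?_⟩, ?_, ?_⟩
  · exact xrec_inj p.inj1 p.inj2 (fun x h => by have := p.hi2 x; omega)
      (fun x h => by have := p.hi1 x; omega) (fun x y h => p.disj y x h.symm)
  · refine xrec_adj ?_ ?_ ?_ ?_ ?_
    · intro a b; rw [hlt _ _ (p.hi1 a) (p.hi1 b)]; exact p.adj1 a b
    · intro a b; rw [hlt _ _ (p.hi2 a) (p.hi2 b)]; exact p.adj2 a b
    · intro a b; rw [hlt _ _ (p.hi2 a) (p.hi1 b)]; exact fun h => p.nadj b a h.symm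
    · intro x
      rw [hWt]
      constructor
      · rintro (⟨a, _, h⟩ | ⟨a, ha, h⟩)
        · exact absurd h (p.disj a x)
        · rw [← p.inj2 h]; exact ha
      · intro h; exact Or.inr ⟨x, h, rfl⟩
    · intro x
      rw [hWt]
      constructor
      · rintro (⟨a, ha, h⟩ | ⟨a, _, h⟩)
        · rw [← p.inj1 h]; exact ha
        · exact absurd h.symm (p.disj x a)
      · intro h; exact Or.inl ⟨x, h, rfl⟩
  · exact xcases _ e.1 p.lo1 p.lo2
  · exact xcases _ (Nat.lt_succ_self t) (fun x => (p.hi1 x).trans (Nat.lt_succ_self t))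
      (fun x => (p.hi2 x).trans (Nat.lt_succ_self t))
  · intro i h1 h2
    by_cases hi : i < t
    · rcases p.sur i h1 hi with ⟨a, ha⟩ | ⟨a, ha⟩
      · exact ⟨xl a, ha⟩
      · exact ⟨xr a, ha⟩
    · exact ⟨xn n, by show t = i; omega⟩
  · rw [← C1, ← C2]
    ext c
    constructor
    · rintro (⟨a, ha, h⟩ | ⟨a, ha, h⟩)
      · refine ⟨xl a, ?_, h⟩
        show (!(XSide (n+2) a)) = false
        rw [ha]; rfl
      · exact ⟨xr a, ha, h⟩
    · rintro ⟨a, ha, h⟩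
      revert ha h
      refine xcases (fun a => XSide (n+3) a = false → cc A (addV H t W) (xrec t φ1 φ2 a) = c → _) ?_ (fun x => ?_) (fun x => ?_) a
      · intro h _
        have : true = false := h
        cases this
      · intro h h'
        have h : (!(XSide (n+2) x)) = false := h
        exact Or.inl ⟨x, by simpa using h, h'⟩
      · intro h h'
        exact Or.inr ⟨x, h, h'⟩
  · rw [← C1, ← C2]
    rintro c (⟨a, ha, h⟩ | ⟨a, ha, h⟩)
    · refine ⟨xl a, ?_, h⟩
      show (!(XSide (n+2) a)) = true
      rw [ha]; rfl
    · exact ⟨xr a, ha, h⟩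

theorem QQ_of {n : ℕ} (hA : IsProperAlg A) (hP : PP A (n+2)) (hH : HH A (n+2)) : QQ A (n+2) := by
  intro H t hs
  obtain ⟨H1, t1, φ1, e1, p1, c1⟩ := hP H t hs
  by_cases hN : n + 2 ≤ (Col A H1 φ1 false).ncard
  · obtain ⟨H2, t2, φ2, e2, p2, -⟩ := hP H1 t1 e1.2.2
    refine ⟨H2, t2, φ2, φ1, e1.trans e2, (p1.two e2 e1.2.2 p2 e1.1).swap, ?_⟩
    rw [Col_congr A (k := n+2) (φ := φ1) p1.hi (fun a b ha _ => e2.2.1 a b ha)]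
    exact hN.trans (Set.ncard_le_ncard Set.subset_union_right ((Col_fin A _ _ _).union (Col_fin A _ _ _)))
  · obtain ⟨H2, t2, φ2, e2, p2, hc⟩ := hH (Col A H1 φ1 false) (Col A H1 φ1 true) (Col_fin A _ _ _)
      (Col_fin A _ _ _) (by omega) ⟨cc A H1 (φ1 (XRoot _)), ⟨_, xroot_side _, rfl⟩, by
        rintro ⟨a, ha, h⟩
        exact cc_proper A hA ((p1.adj _ _).2 (xroot_adj n a ha)) h.symm⟩ H1 t1 e1.2.2
    have hcg : ∀ b, Col A H2 φ1 b = Col A H1 φ1 b :=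
      Col_congr A (k := n+2) (φ := φ1) p1.hi (fun a b ha _ => e2.2.1 a b ha)
    rcases hc with ⟨c, hc, hcN⟩ | hc
    · refine ⟨H2, t2, φ2, φ1, e1.trans e2, (p1.two e2 e1.2.2 p2 e1.1).swap, ?_⟩
      rw [hcg]
      have h1 : (insert c (Col A H1 φ1 false)).ncard = (Col A H1 φ1 false).ncard + 1 :=
        Set.ncard_insert_of_notMem hcN (Col_fin A _ _ _)
      have h2 : (insert c (Col A H1 φ1 false)).ncard ≤ (Col A H2 φ2 true ∪ Col A H1 φ1 false).ncard := by
        refine Set.ncard_le_ncard ?_ ((Col_fin A _ _ _).union (Col_fin A _ _ _))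
        rintro d (rfl | hd)
        · exact Or.inl hc
        · exact Or.inr hd
      omega
    · refine ⟨H2, t2, φ1, φ2, e1.trans e2, p1.two e2 e1.2.2 p2 e1.1, ?_⟩
      rw [hcg, Set.union_comm]
      exact hc

theorem PP_succ {n : ℕ} (hQ : QQ A (n+2)) : PP A (n+3) := by
  intro H t hs
  obtain ⟨H1, t1, φ1, φ2, e, p, hc⟩ := hQ H t hs
  obtain ⟨H', t', φ, e', p', h1, -⟩ := rootstep A e p
  refine ⟨H', t', φ, e', p', ?_⟩
  rw [← h1]; omega

theorem HH_succ {n : ℕ} (hQ : QQ A (n+2)) : HH A (n+3) := by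
  intro S Z hSf hZf hS ⟨z, hz, hzS⟩ H t hs
  obtain ⟨H1, t1, φ1, φ2, e, p, hc⟩ := hQ H t hs
  by_cases h1 : ∃ c ∈ Col A H1 φ1 true ∪ Col A H1 φ2 false, c ∉ S
  · obtain ⟨c, hcc, hcS⟩ := h1
    obtain ⟨H', t', φ, e', p', -, h2⟩ := rootstep A e p.swap
    exact ⟨H', t', φ, e', p', Or.inl ⟨c, h2 hcc.symm, hcS⟩⟩
  · push Not at h1
    obtain ⟨H', t', φ, e', p', h2, -⟩ := rootstep A e p
    refine ⟨H', t', φ, e', p', Or.inr ?_⟩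
    rw [← h2]
    have hEq : Col A H1 φ1 true ∪ Col A H1 φ2 false = S :=
      Set.eq_of_subset_of_ncard_le h1 (by omega) hSf
    rw [hEq]
    have h3 : (insert z S).ncard = S.ncard + 1 := Set.ncard_insert_of_notMem hzS hSf
    have h4 : (insert z S).ncard ≤ (S ∪ Z).ncard := by
      refine Set.ncard_le_ncard ?_ (hSf.union hZf)
      rintro d (rfl | hd)
      · exact Or.inr hz
      · exact Or.inl hd
    omega

theorem base_two (H : SimpleGraph ℕ) (t : ℕ) (hs : Supp H t) : ∃ H', HExt H t H' (t+2) ∧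
    H'.Adj t (t+1) ∧ ∀ r : Bool, Place 2 H' t (t+2) (fun a : Bool => if a = r then t else t+1) := by
  have e0 : HExt H t H (t+1) := ⟨by omega, fun _ _ _ => Iff.rfl, fun a b h => by have := hs a b h; omega⟩
  have hW : ∀ w ∈ ({t} : Set ℕ), t ≤ w ∧ w < t+1 := by
    intro w hw
    have : w = t := hw
    omega
  have hadj : (addV H (t+1) {t}).Adj (t+1) t :=
    (addV_t H (t+1) {t} (fun w hw => (hW w hw).2) e0.2.2).2 rfl
  refine ⟨addV H (t+1) {t}, addV_ext e0 hW, hadj.symm, fun r => ⟨?_, ?_, ?_, ?_, ?_⟩⟩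
  · intro (a : Bool) (b : Bool) h
    cases a <;> cases b <;> cases r <;> simp at h <;> rfl
  · intro (a : Bool) (b : Bool)
    refine Iff.trans ?_ (xadj_two a b).symm
    have := hadj.symm
    cases a <;> cases b <;> cases r <;> simp [hadj, this]
  · intro (a : Bool)
    show t ≤ if a = r then t else t + 1
    split_ifs <;> omega
  · intro (a : Bool)
    show (if a = r then t else t + 1) < t + 2
    split_ifs <;> omega
  · intro i h1 h2
    by_cases hi : i = t
    · exact ⟨(r : Bool), by simp [hi]⟩
    · refine ⟨(!r : Bool), ?_⟩
      have : i = t + 1 := by omega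
      rw [this]
      cases r <;> simp

theorem PP_two : PP A 2 := by
  intro H t hs
  obtain ⟨H', e, -, p⟩ := base_two H t hs
  refine ⟨H', t+2, _, e, p true, ?_⟩
  have : (Col A H' (k := 2) (fun a : Bool => if a = true then t else t+1) false).Nonempty :=
    ⟨_, (false : Bool), rfl, rfl⟩
  have := (Set.ncard_pos (Col_fin A _ _ _)).2 this
  omega

theorem HH_two (hA : IsProperAlg A) : HH A 2 := by
  intro S Z _ _ hS _ H t hs
  obtain ⟨H', e, hadj, p⟩ := base_two H t hs
  have hne := cc_proper A hA hadj
  obtain ⟨s, rfl⟩ := Set.ncard_eq_one.1 (show S.ncard = 1 by omega)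
  by_cases h : cc A H' t = s
  · refine ⟨H', t+2, _, e, p false, Or.inl ⟨cc A H' (t+1), ⟨(true : Bool), rfl, rfl⟩, ?_⟩⟩
    intro h'
    have h' : cc A H' (t+1) = s := h'
    exact hne (h.trans h'.symm)
  · exact ⟨H', t+2, _, e, p true, Or.inl ⟨cc A H' t, ⟨(true : Bool), rfl, rfl⟩, h⟩⟩

theorem PPHH (hA : IsProperAlg A) (n : ℕ) : PP A (n+2) ∧ HH A (n+2) := by
  induction n with
  | zero => exact ⟨PP_two A, HH_two A hA⟩
  | succ n ih =>
    have := QQ_of A hA ih.1 ih.2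
    exact ⟨PP_succ A this, HH_succ A this⟩

theorem online_force {N K : ℕ} (hA : IsProperAlg A) (G : SimpleGraph (Fin N))
    (f : XGraph (K+2) ↪g G) : ∃ π : Fin N ≃ Fin N, K + 2 ≤ numColors A (G.comap π) := by
  classical
  obtain ⟨H, t, φ, e, p, hc⟩ := (PPHH A hA K).1 ⊥ 0 (fun a b h => absurd h (by simp))
  have := xfinite (K+2)
  -- inverse of φ
  have hsur : ∀ i : Fin t, ∃ a, φ a = i := fun i => p.sur i (Nat.zero_le _) i.2
  choose g hg using hsur
  have hginj : Function.Injective (fun i => f (g i)) := by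
    intro i j h
    have h := f.injective h
    apply Fin.ext
    rw [← hg i, ← hg j, h]
  have htN : t ≤ N := by
    have := Fintype.card_le_of_injective _ hginj
    simpa using this
  by_cases hN : N = 0
  · subst hN
    exact (f (XRoot _)).elim0
  have hpos : 0 < N := Nat.pos_of_ne_zero hN
  obtain ⟨π, hπ⟩ := Finset.exists_equiv_extend_of_card_eq (α := Fin N) (t := (Finset.univ : Finset (Fin N)))
    (by simp) (s := Finset.univ.filter (fun i : Fin N => i.1 < t))
    (f := fun i => if h : i.1 < t then f (g ⟨i.1, h⟩) else ⟨0, hpos⟩) (by simp) (by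
      intro i hi j hj h
      have hi : i.1 < t := by simpa using hi
      have hj : j.1 < t := by simpa using hj
      simp only [hi, hj, dif_pos] at h
      have := hginj h
      exact Fin.ext (by simpa using this))
  let π' : Fin N ≃ Fin N := π.trans (Equiv.subtypeUnivEquiv (by simp))
  have hπ' : ∀ (i : Fin N) (h : i.1 < t), π' i = f (g ⟨i.1, h⟩) := by
    intro i h
    have := hπ i (by simpa using h)
    rw [dif_pos h] at this
    exact this
  refine ⟨π', ?_⟩
  have hrun : ∀ (i : Fin N) (h : i.1 < t), runColor A (G.comap π') i = cc A H i.1 := by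
    intro i h
    unfold runColor cc
    congr 1
    ext a b
    show G.Adj (π' _) (π' _) ↔ H.Adj a.1 b.1
    have ha : a.1 < t := by have := a.2; omega
    have hb : b.1 < t := by have := b.2; omega
    rw [hπ' _ (show (Fin.castLE i.isLt a).1 < t from ha), hπ' _ (show (Fin.castLE i.isLt b).1 < t from hb),
      f.map_adj_iff, ← p.adj, hg, hg]
    rfl
  have hmem : ∀ a, cc A H (φ a) ∈ (Finset.univ.image (runColor A (G.comap π')) : Finset ℕ) := by
    intro a
    rw [Finset.mem_image]
    exact ⟨⟨φ a, (p.hi a).trans_le htN⟩, Finset.mem_univ _, hrun _ (p.hi a)⟩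
  have hroot : cc A H (φ (XRoot _)) ∉ Col A H φ false := by
    rintro ⟨a, ha, h⟩
    exact cc_proper A hA ((p.adj _ _).2 (xroot_adj K a ha)) h.symm
  have h1 := Set.ncard_insert_of_notMem hroot (Col_fin A _ _ _)
  have h2 : (insert (cc A H (φ (XRoot _))) (Col A H φ false)).ncard ≤
      ((Finset.univ.image (runColor A (G.comap π')) : Finset ℕ) : Set ℕ).ncard := by
    refine Set.ncard_le_ncard ?_ (Finset.finite_toSet _)
    rintro c (rfl | ⟨a, _, rfl⟩)
    · exact hmem _
    · exact hmem _
  rw [Set.ncard_coe_finset] at h2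
  unfold numColors
  omega

end Online

theorem online_lower {N K : ℕ} (hN : 0 < N) (G : SimpleGraph (Fin N))
    (hf : 2 ≤ K → Nonempty (XGraph K ↪g G)) : K ≤ onlineChrom (Fin N) G := by
  unfold onlineChrom
  apply le_csInf
  · refine ⟨N, fun k _ => k, ?_, ?_⟩
    · intro n G i j h h'
      exact h.ne (Fin.ext h')
    · intro n π
      have : n = N := by simpa using Fintype.card_congr π
      subst this
      unfold numColors
      exact Finset.card_image_le.trans (by simp)
  · rintro m ⟨A, hA, hm⟩
    by_cases hK : 2 ≤ K
    · obtain ⟨K, rfl⟩ : ∃ K', K = K' + 2 := ⟨K - 2, by omega⟩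
      obtain ⟨f⟩ := hf hK
      obtain ⟨π, hπ⟩ := online_force A hA G f
      exact hπ.trans (hm N π)
    · have h1 := hm N (Equiv.refl _)
      have h2 : 0 < numColors A (G.comap (Equiv.refl (Fin N))) := by
        unfold numColors
        exact Finset.card_pos.2 ⟨_, Finset.mem_image_of_mem _ (Finset.mem_univ ⟨0, hN⟩)⟩
      omega

theorem stmt13 (G : SimpleGraph ℕ) (n : ℕ) (hfin : ∀ i j, G.Adj i j → i < n ∧ j < n)
    (hP9 : PFree G 9)
    (hbip : ∃ side : ℕ → Bool, ∀ x y, G.Adj x y → side x ≠ side y)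
    (k : ℕ) (hk : 2 ≤ k)
    (hmax : ∃ v < n, (algoCol G v).index = k)
    (hbound : ∀ v < n, (algoCol G v).index ≤ k) :
    ((Finset.range n).image (algoCol G)).card ≤ 3 * k ∧
    Nonempty (XGraph (⌊Real.sqrt ((k : ℝ) / 2)⌋₊) ↪g G) ∧
    ⌊Real.sqrt ((k : ℝ) / 2)⌋₊ ≤ onlineChrom (Fin n) (G.comap Fin.val) := by
  obtain ⟨side, hb⟩ := hbip
  obtain ⟨v, hvn, hv⟩ := hmax
  have hs : 2 * ⌊Real.sqrt ((k : ℝ) / 2)⌋₊ ^ 2 ≤ k := by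
    have h1 := Nat.floor_le (Real.sqrt_nonneg ((k : ℝ) / 2))
    have h2 := Real.sq_sqrt (show (0:ℝ) ≤ (k:ℝ) / 2 by positivity)
    have h0 : (0:ℝ) ≤ (⌊Real.sqrt ((k : ℝ) / 2)⌋₊ : ℝ) := Nat.cast_nonneg _
    have : (2 * (⌊Real.sqrt ((k : ℝ) / 2)⌋₊ : ℝ) ^ 2) ≤ k := by nlinarith
    exact_mod_cast this
  have hX := final_X G hb hP9 hv hs
  refine ⟨three_k G n k hbound, hX, ?_⟩
  generalize ⌊Real.sqrt ((k : ℝ) / 2)⌋₊ = K at hX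
  refine online_lower (by omega) _ ?_
  intro hK
  obtain ⟨K, rfl⟩ : ∃ K', K = K' + 2 := ⟨K - 2, by omega⟩
  obtain ⟨f⟩ := hX
  have hlt : ∀ a, f a < n := by
    intro a
    obtain ⟨b, hab⟩ := xnbr K a
    exact (hfin _ _ (f.map_adj_iff.2 hab)).1
  refine ⟨⟨⟨fun a => ⟨f a, hlt a⟩, ?_⟩, ?_⟩⟩
  · intro a b h
    exact f.injective (Fin.mk.inj h)
  · intro a b
    exact f.map_adj_iff
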